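/- arXiv:2009.11855 — 3 statements merged into one kernel-verified Lean document; each statement's English description precedes it below -/
import Mathlib

section
/- The problem (BPC) has a unique solution if and only if the Hermitian Toeplitz matrix T_y is neither positive definite nor negative definite. -/
open MeasureTheory Complex Real Matrix
open scoped Real ComplexOrder

noncomputable section

instance : Fact (0 < 2 * π) := ⟨by positivity⟩

/-- The circle `𝕋 = ℝ/2πℤ`. -/
abbrev Circle2pi := AddCircle (2 * π)

/-- The `k`-th Fourier coefficient of a finite signed Borel measure `w` on `𝕋`:
`ŵ[k] = ∫ e^{-ikt} dw⁺(t) - ∫ e^{-ikt} dw⁻(t)`, where `w = w⁺ - w⁻` is the Jordan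
decomposition. -/
noncomputable def sFourierCoeff (w : MeasureTheory.SignedMeasure Circle2pi) (k : ℤ) : ℂ :=
  (∫ t, fourier (-k) t ∂w.toJordanDecomposition.posPart)
    - ∫ t, fourier (-k) t ∂w.toJordanDecomposition.negPart

/-- The total variation norm `‖w‖ = w⁺(𝕋) + w⁻(𝕋)`. -/
noncomputable def tvNorm (w : MeasureTheory.SignedMeasure Circle2pi) : ℝ :=
  (w.totalVariation Set.univ).toReal

/-- `w` is feasible for the data `y` : `ŵ[k] = y k` for all `|k| ≤ K_c`. -/
def Feasible (Kc : ℕ) (y : ℤ → ℂ) (w : MeasureTheory.SignedMeasure Circle2pi) : Prop :=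
  ∀ k : ℤ, |k| ≤ (Kc : ℤ) → sFourierCoeff w k = y k

/-- `w` is a solution of the problem (BPC): it is feasible and minimizes the total
variation norm among feasible measures. -/
def IsBPCSolution (Kc : ℕ) (y : ℤ → ℂ) (w : MeasureTheory.SignedMeasure Circle2pi) : Prop :=
  Feasible Kc y w ∧ ∀ v : MeasureTheory.SignedMeasure Circle2pi, Feasible Kc y v →
    tvNorm w ≤ tvNorm v

/-- The Hermitian Toeplitz matrix `T_y` with entries `(T_y)_{i,j} = y_{j-i}`. -/
def Ty (Kc : ℕ) (y : ℤ → ℂ) : Matrix (Fin (Kc + 1)) (Fin (Kc + 1)) ℂ :=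
  Matrix.of fun i j => y ((j : ℤ) - (i : ℤ))

/-!
By Hahn–Banach duality a feasible problem has solutions, and a real trigonometric polynomial `p` of
degree at most `K_c` with `|p| ≤ 1` such that `∫ p dw = ‖w‖` for every solution `w`. Hence `p = 1`
on the positive part of `w` and `p = -1` on its negative part. If `p` is not constant, `|p| = 1` at
no more than `2 K_c` points, because these are zeros of `p'`. If `p` is constant, all solutions have
the same sign, and a kernel vector of the semidefinite matrix `± T_y` yields a trigonometric
polynomial vanishing on their supports. Either way all solutions live on a common set of at most
`2 K_c` points, where the moments determine them.

If `T_y` is positive definite, every positive feasible measure is a solution. One of them has finite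
support, by the trigonometric moment problem for `T_y`; solving it for `T_y - ε` instead and adding
`ε` times Haar measure gives another one.
-/

section TotalVariation

variable {X : Type*} [MeasurableSpace X]

instance isFiniteMeasure_variation (w : SignedMeasure X) : IsFiniteMeasure w.variation := by
  rw [← w.totalVariation_eq_variation]
  infer_instance

lemma variationReal_add_le (v w : SignedMeasure X) (s : Set X) :
    (v + w).variation.real s ≤ v.variation.real s + w.variation.real s := by
  rw [← measureReal_add_apply]
  exact ENNReal.toReal_mono (measure_ne_top _ s) (VectorMeasure.variation_add_le s)

lemma variationReal_smul (c : ℝ) (w : SignedMeasure X) (s : Set X) :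
    (c • w).variation.real s = |c| * w.variation.real s := by
  rw [VectorMeasure.variation_smul, measureReal_nnreal_smul_apply]
  simp

lemma convex_variation_le (M : ℝ) :
    Convex ℝ {w : SignedMeasure X | w.variation.real Set.univ ≤ M} := by
  intro v hv w hw a b ha hb hab
  calc (a • v + b • w).variation.real Set.univ
      ≤ a * v.variation.real Set.univ + b * w.variation.real Set.univ := by
        simpa only [variationReal_smul, abs_of_nonneg ha, abs_of_nonneg hb]
          using variationReal_add_le (a • v) (b • w) Set.univ
    _ ≤ a * M + b * M := by gcongr <;> assumption
    _ = M := by rw [← add_mul, hab, one_mul]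

lemma variationReal_eq_add (w : SignedMeasure X) (s : Set X) :
    w.variation.real s = w.toJordanDecomposition.posPart.real s
      + w.toJordanDecomposition.negPart.real s := by
  rw [← w.totalVariation_eq_variation, SignedMeasure.totalVariation, measureReal_add_apply]

lemma variationReal_sub_le (μ ν : Measure X) [IsFiniteMeasure μ] [IsFiniteMeasure ν]
    (s : Set X) :
    (μ.toSignedMeasure - ν.toSignedMeasure).variation.real s ≤ μ.real s + ν.real s := by
  rw [← measureReal_add_apply]
  refine ENNReal.toReal_mono (measure_ne_top _ s) ?_
  simpa using VectorMeasure.variation_sub_le (μ := μ.toSignedMeasure) (ν := ν.toSignedMeasure) s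

lemma variation_eq_zero_iff_jordan {w : SignedMeasure X} {s : Set X} :
    w.variation s = 0 ↔ w.toJordanDecomposition.posPart s = 0 ∧
      w.toJordanDecomposition.negPart s = 0 := by
  rw [← w.totalVariation_eq_variation, SignedMeasure.totalVariation, Measure.add_apply,
    add_eq_zero]

lemma eq_toSignedMeasure_posPart {w : SignedMeasure X}
    (h : w.toJordanDecomposition.negPart = 0) :
    w = w.toJordanDecomposition.posPart.toSignedMeasure := by
  conv_lhs => rw [← w.toSignedMeasure_toJordanDecomposition]
  simp [JordanDecomposition.toSignedMeasure, h]

lemma integral_le_measureReal_univ {μ : Measure X} [IsFiniteMeasure μ] {f : X → ℝ}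
    (hf : Integrable f μ) (hf1 : ∀ x, f x ≤ 1) :
    ∫ x, f x ∂μ ≤ μ.real Set.univ := by
  simpa using integral_mono hf (integrable_const 1) hf1

lemma ae_eq_one_of_measureReal_univ_le_integral {μ : Measure X} [IsFiniteMeasure μ] {f : X → ℝ}
    (hf : Integrable f μ) (hf1 : ∀ x, f x ≤ 1) (h : μ.real Set.univ ≤ ∫ x, f x ∂μ) :
    ∀ᵐ x ∂μ, f x = 1 := by
  refine (integral_eq_iff_of_ae_le hf (integrable_const 1) (.of_forall hf1)).1 ?_
  simpa using (integral_le_measureReal_univ hf hf1).antisymm h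

end TotalVariation

section SignedMeasureDual

variable {X : Type*} [TopologicalSpace X] [CompactSpace X] [MeasurableSpace X]
  [OpensMeasurableSpace X]

lemma integrable_continuousMap {E : Type*} [NormedAddCommGroup E] (μ : Measure X)
    [IsFiniteMeasure μ] (f : C(X, E)) : Integrable f μ :=
  f.continuous.integrable_of_hasCompactSupport (.of_compactSpace f)

/-- Integration of continuous functions against a signed measure, as a map to the dual. -/
def integralDual : SignedMeasure X →ₗ[ℝ] StrongDual ℝ C(X, ℝ) where
  toFun w := LinearMap.mkContinuous
    { toFun p := ∫ᵛ x, p x ∂<•w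
      map_add' p q := VectorMeasure.integral_add (integrable_continuousMap _ p)
        (integrable_continuousMap _ q)
      map_smul' c p := VectorMeasure.integral_smul _ _ _ c }
    (w.variation.real Set.univ) fun p => by
      simpa [mul_comm] using VectorMeasure.norm_integral_le_of_norm_le_const (μ := w)
        (B := (ContinuousLinearMap.lsmul ℝ ℝ).flip) (.of_forall p.norm_coe_le_norm)
  map_add' v w := by
    ext p
    exact VectorMeasure.integral_add_vectorMeasure (integrable_continuousMap _ p)
      (integrable_continuousMap _ p)
  map_smul' c w := by
    ext p
    exact VectorMeasure.integral_smul_vectorMeasure _ c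

@[simp]
lemma integralDual_apply (w : SignedMeasure X) (p : C(X, ℝ)) :
    integralDual w p = ∫ᵛ x, p x ∂<•w :=
  rfl

lemma integralDual_toSignedMeasure (μ : Measure X) [IsFiniteMeasure μ] (p : C(X, ℝ)) :
    integralDual μ.toSignedMeasure p = ∫ x, p x ∂μ :=
  VectorMeasure.integral_toSignedMeasure

lemma integral_eq_posPart_sub_negPart {E : Type*} [NormedAddCommGroup E] [NormedSpace ℝ E]
    (w : SignedMeasure X) (p : C(X, E)) :
    ∫ᵛ x, p x ∂<•w = ∫ x, p x ∂w.toJordanDecomposition.posPart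
      - ∫ x, p x ∂w.toJordanDecomposition.negPart := by
  conv_lhs => rw [← w.toSignedMeasure_toJordanDecomposition]
  rw [JordanDecomposition.toSignedMeasure, VectorMeasure.integral_sub_vectorMeasure,
    VectorMeasure.integral_toSignedMeasure, VectorMeasure.integral_toSignedMeasure]
  all_goals exact integrable_continuousMap _ p

lemma integralDual_le_variationReal (w : SignedMeasure X) {p : C(X, ℝ)} (hp : ‖p‖ ≤ 1) :
    integralDual w p ≤ w.variation.real Set.univ := by
  have h : ‖∫ᵛ x, p x ∂<•w‖ ≤ w.variation.real Set.univ := by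
    simpa using VectorMeasure.norm_integral_le_of_norm_le_const (μ := w)
      (B := (ContinuousLinearMap.lsmul ℝ ℝ).flip)
      (.of_forall fun x => (p.norm_coe_le_norm x).trans hp)
  exact (le_abs_self _).trans h

lemma ae_eq_of_variationReal_le_integralDual {w : SignedMeasure X} {p : C(X, ℝ)}
    (hp : ‖p‖ ≤ 1) (hw : w.variation.real Set.univ ≤ integralDual w p) :
    (∀ᵐ x ∂w.toJordanDecomposition.posPart, p x = 1) ∧
      ∀ᵐ x ∂w.toJordanDecomposition.negPart, p x = -1 := by
  set μ := w.toJordanDecomposition.posPart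
  set ν := w.toJordanDecomposition.negPart
  have hle (x : X) : |p x| ≤ 1 := (p.norm_coe_le_norm x).trans hp
  have hp1 (x : X) : p x ≤ 1 := (le_abs_self _).trans (hle x)
  have hn1 (x : X) : -p x ≤ 1 := (neg_le_abs _).trans (hle x)
  have hpμ := integrable_continuousMap μ p
  have hpν := (integrable_continuousMap ν p).neg
  have hμ := integral_le_measureReal_univ hpμ hp1
  have hν := integral_le_measureReal_univ hpν hn1
  simp only [Pi.neg_apply, integral_neg] at hν
  rw [integralDual_apply, integral_eq_posPart_sub_negPart, variationReal_eq_add] at hw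
  constructor
  · exact ae_eq_one_of_measureReal_univ_le_integral hpμ hp1 (by linarith)
  · have := ae_eq_one_of_measureReal_univ_le_integral hpν hn1
      (by simp only [Pi.neg_apply, integral_neg]; linarith)
    exact this.mono fun x hx => neg_eq_iff_eq_neg.1 hx

end SignedMeasureDual

section Duality

variable {X : Type*} [TopologicalSpace X] [CompactSpace X] [T2Space X] [MeasurableSpace X]
  [BorelSpace X]

lemma isCompact_image_variation_le (M : NNReal) :
    IsCompact ((fun w : SignedMeasure X => (integralDual w).toWeakDual) ''
      {w | w.variation.real Set.univ ≤ M}) := by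
  let diff (q : FiniteMeasure X × FiniteMeasure X) : SignedMeasure X :=
    (q.1 : Measure X).toSignedMeasure - (q.2 : Measure X).toSignedMeasure
  have himage : {w : SignedMeasure X | w.variation.real Set.univ ≤ M} =
      diff '' {q | q.1.mass + q.2.mass ≤ M} := by
    ext w
    constructor
    · intro hw
      refine ⟨(⟨w.toJordanDecomposition.posPart, inferInstance⟩,
        ⟨w.toJordanDecomposition.negPart, inferInstance⟩), ?_,
        w.toSignedMeasure_toJordanDecomposition⟩
      rw [Set.mem_ofPred_eq, variationReal_eq_add] at hw
      exact_mod_cast hw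
    · rintro ⟨⟨μ, ν⟩, hq, rfl⟩
      exact (variationReal_sub_le _ _ _).trans (by exact_mod_cast hq)
  have hcompact : IsCompact {q : FiniteMeasure X × FiniteMeasure X | q.1.mass + q.2.mass ≤ M} := by
    have hball := isCompact_setOfPred_finiteMeasure_le_of_compactSpace X M
    refine (hball.prod hball).of_isClosed_subset (isClosed_le (by fun_prop) (by fun_prop)) ?_
    exact fun q (hq : q.1.mass + q.2.mass ≤ M) => ⟨le_self_add.trans hq, le_add_self.trans hq⟩
  rw [himage, Set.image_image]
  refine hcompact.image (WeakDual.continuous_of_continuous_eval fun p => ?_)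
  have hcont : Continuous fun μ : FiniteMeasure X => ∫ x, p x ∂(μ : Measure X) :=
    continuous_iff_continuousAt.2 fun μ => FiniteMeasure.tendsto_iff_forall_integral_tendsto.1
      Filter.tendsto_id (BoundedContinuousFunction.mkOfCompact p)
  have heq (q : FiniteMeasure X × FiniteMeasure X) : (integralDual (diff q)).toWeakDual p =
      ∫ x, p x ∂(q.1 : Measure X) - ∫ x, p x ∂(q.2 : Measure X) := by
    rw [map_sub, ← integralDual_toSignedMeasure, ← integralDual_toSignedMeasure]
    rfl
  simp only [heq]
  exact (hcont.comp continuous_fst).sub (hcont.comp continuous_snd)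

/-- The functionals of measures of mass at most `M` form a weak-* compact convex set, from which
`L` would otherwise be separated by a continuous function. -/
theorem exists_integralDual_eq {L : C(X, ℝ) →ₗ[ℝ] ℝ} {M : NNReal} (hL : ∀ p, L p ≤ M * ‖p‖) :
    ∃ w : SignedMeasure X, (∀ p, integralDual w p = L p) ∧ w.variation.real Set.univ ≤ M := by
  set S := (fun w : SignedMeasure X => (integralDual w).toWeakDual) ''
      {w | w.variation.real Set.univ ≤ M}
  let Λ : StrongDual ℝ C(X, ℝ) := L.mkContinuous M fun p => abs_le'.2
    ⟨hL p, by simpa using hL (-p)⟩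
  suffices h : Λ.toWeakDual ∈ S by
    obtain ⟨w, hw, hwΛ⟩ := h
    exact ⟨w, fun p => congrArg (fun l => l p) hwΛ, hw⟩
  by_contra hΛS
  have hconvex : Convex ℝ S := (convex_variation_le _).linear_image
      (StrongDual.toWeakDual.toLinearMap ∘ₗ integralDual)
  have : LocallyConvexSpace ℝ (WeakDual ℝ C(X, ℝ)) :=
    inferInstanceAs (LocallyConvexSpace ℝ (WeakBilin (topDualPairing ℝ C(X, ℝ))))
  obtain ⟨F, u, hu, huΛ⟩ := geometric_hahn_banach_closed_point hconvex
    (isCompact_image_variation_le M).isClosed hΛS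
  obtain ⟨p, rfl⟩ := LinearMap.dualEmbedding_surjective (topDualPairing ℝ C(X, ℝ)) F
  have hdirac (c : ℝ) (hc : |c| ≤ M) (x : X) : c * p x < u := by
    have hvar : (c • (Measure.dirac x).toSignedMeasure).variation.real Set.univ ≤ M := by
      simpa [variationReal_smul] using hc
    have hlt : integralDual (c • (Measure.dirac x).toSignedMeasure) p < u := hu _ ⟨_, hvar, rfl⟩
    rwa [map_smul, _root_.smul_apply, integralDual_toSignedMeasure, integral_dirac,
      smul_eq_mul] at hlt
  have hnorm : ‖(M : ℝ) • p‖ ≤ u := by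
    have h0 : 0 < u := by
      have hlt : integralDual (0 : SignedMeasure X) p < u := hu _ ⟨0, by simp, rfl⟩
      rwa [map_zero] at hlt
    refine (ContinuousMap.norm_le _ h0.le).2 fun x => abs_le.2 ⟨?_, ?_⟩
    · have := hdirac (-M) (by simp) x
      rw [ContinuousMap.smul_apply, smul_eq_mul]
      linarith
    · exact (hdirac M (by simp) x).le
  refine huΛ.not_ge ?_
  calc L p ≤ M * ‖p‖ := hL p
    _ ≤ u := by simpa [norm_smul] using hnorm

/-- The norm of the restriction of `w₀` to `V` is attained at some `p` in the unit ball; a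
Hahn–Banach extension preserves it. -/
theorem exists_dual_certificate (V : Submodule ℝ C(X, ℝ)) [FiniteDimensional ℝ V]
    (w₀ : SignedMeasure X) :
    ∃ p ∈ V, ‖p‖ ≤ 1 ∧ ∃ w : SignedMeasure X, (∀ q ∈ V, integralDual w q = integralDual w₀ q) ∧
      w.variation.real Set.univ ≤ integralDual w₀ p := by
  let L : V →ₗ[ℝ] ℝ := (integralDual w₀ : C(X, ℝ) →ₗ[ℝ] ℝ) ∘ₗ V.subtype
  obtain ⟨p, hp, hmax⟩ := (isCompact_closedBall (0 : V) 1).exists_isMaxOn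
    ⟨0, by simp⟩ L.continuous_of_finiteDimensional.continuousOn
  have hball (q : V) : q ∈ Metric.closedBall (0 : V) 1 ↔ ‖(q : C(X, ℝ))‖ ≤ 1 :=
    mem_closedBall_zero_iff
  have hLp (q : V) : L q ≤ L p * ‖(q : C(X, ℝ))‖ := by
    rcases eq_or_ne q 0 with rfl | hq
    · simp
    have hq' : 0 < ‖(q : C(X, ℝ))‖ := norm_pos_iff.2 (by simpa using hq)
    have : L (‖(q : C(X, ℝ))‖⁻¹ • q) ≤ L p := hmax <| (hball _).2 <| by
      rw [V.coe_smul, norm_smul, norm_inv, norm_norm, inv_mul_cancel₀ hq'.ne']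
    rwa [map_smul, smul_eq_mul, inv_mul_le_iff₀' hq'] at this
  have hp0 : 0 ≤ L p := by
    have : L 0 ≤ L p := hmax ((hball 0).2 (by simp))
    rwa [map_zero] at this
  obtain ⟨g, hgL, hg⟩ := exists_extension_of_le_sublinear ⟨V, L⟩ (fun q => L p * ‖q‖)
    (fun c hc q => by rw [norm_smul, Real.norm_of_nonneg hc.le]; ring)
    (fun q r => by rw [← mul_add]; gcongr; exact norm_add_le q r) hLp
  obtain ⟨w, hwg, hw⟩ := exists_integralDual_eq (M := ⟨L p, hp0⟩) hg
  exact ⟨p, p.2, (hball p).1 hp, w, fun q hq => (hwg q).trans (hgL ⟨q, hq⟩), hw⟩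

end Duality

section RealPart

variable {X : Type*} [TopologicalSpace X]

/-- The inclusion of the real continuous functions into the complex ones. -/
def ofRealMap : C(X, ℝ) →ₗ[ℝ] C(X, ℂ) :=
  (ofRealCLM.compLeftContinuous ℝ X).toLinearMap

/-- The real part of complex continuous functions, as a real linear map. -/
def reMap : C(X, ℂ) →ₗ[ℝ] C(X, ℝ) :=
  (reCLM.compLeftContinuous ℝ X).toLinearMap

lemma ofRealMap_injective : Function.Injective (ofRealMap (X := X)) := fun _ _ h =>
  ContinuousMap.ext fun t => ofReal_injective (congrArg (fun f => f t) h)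

end RealPart

section TrigPoly

open Polynomial

variable {T : ℝ} {K : ℕ}

variable (T K) in
/-- The complex trigonometric polynomials of degree at most `K`. -/
def trigPoly : Submodule ℂ C(AddCircle T, ℂ) :=
  Submodule.span ℂ (fourier '' Set.Icc (-(K : ℤ)) K)

variable (T K) in
/-- The real-valued trigonometric polynomials of degree at most `K`. -/
def realTrigPoly : Submodule ℝ C(AddCircle T, ℝ) :=
  ((trigPoly T K).restrictScalars ℝ).comap ofRealMap

lemma fourier_mem_trigPoly {k : ℤ} (hk : |k| ≤ K) : fourier k ∈ trigPoly T K :=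
  Submodule.subset_span ⟨k, abs_le.1 hk, rfl⟩

lemma one_mem_realTrigPoly : 1 ∈ realTrigPoly T K := by
  have h : ofRealMap 1 = (fourier 0 : C(AddCircle T, ℂ)) := by
    ext t
    simp [ofRealMap]
  rw [realTrigPoly, Submodule.mem_comap, h]
  exact fourier_mem_trigPoly (by simp)

lemma star_mem_trigPoly {p : C(AddCircle T, ℂ)} (hp : p ∈ trigPoly T K) :
    star p ∈ trigPoly T K := by
  induction hp using Submodule.span_induction with
  | mem p hp =>
    obtain ⟨k, hk, rfl⟩ := hp
    have hstar : star (fourier k) = (fourier (-k) : C(AddCircle T, ℂ)) :=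
      ContinuousMap.ext fun t => fourier_neg.symm
    exact hstar ▸ fourier_mem_trigPoly (by rw [abs_neg]; exact abs_le.2 hk)
  | zero => simp
  | add p q _ _ hp hq => simpa using add_mem hp hq
  | smul c p _ hp => simpa using Submodule.smul_mem _ (star c) hp

lemma reMap_mem_realTrigPoly {p : C(AddCircle T, ℂ)} (hp : p ∈ trigPoly T K) :
    reMap p ∈ realTrigPoly T K := by
  have hre : ofRealMap (reMap p) = (2⁻¹ : ℂ) • (p + star p) := by
    ext t
    exact (re_eq_add_conj (p t)).trans (div_eq_inv_mul _ _)
  rw [realTrigPoly, Submodule.mem_comap, hre]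
  exact Submodule.smul_mem _ _ (add_mem hp (star_mem_trigPoly hp))

instance finiteDimensional_trigPoly : FiniteDimensional ℂ (trigPoly T K) :=
  FiniteDimensional.span_of_finite ℂ ((Set.finite_Icc _ _).image _)

instance finiteDimensional_realTrigPoly : FiniteDimensional ℝ (realTrigPoly T K) := by
  have : Module.Finite ℝ ((trigPoly T K).restrictScalars ℝ) :=
    Module.Finite.trans (R := ℝ) ℂ (trigPoly T K)
  have : FiniteDimensional ℝ (LinearMap.ker (ofRealMap (X := AddCircle T))) := by
    rw [LinearMap.ker_eq_bot.2 ofRealMap_injective]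
    infer_instance
  exact inferInstanceAs (FiniteDimensional ℝ (Submodule.comap ofRealMap _))

lemma fourier_one_pow (n : ℕ) (t : AddCircle T) : fourier 1 t ^ n = fourier (n : ℤ) t := by
  induction n with
  | zero => simp
  | succ n ih => rw [pow_succ, ih, Nat.cast_succ, fourier_add]

lemma fourier_one_injective [hT : Fact (0 < T)] :
    Function.Injective fun t : AddCircle T => fourier 1 t := by
  intro s t h
  simp only [fourier_one] at h
  exact AddCircle.injective_toCircle hT.out.ne' (Circle.ext h)

lemma fourier_ne_zero (k : ℤ) (t : AddCircle T) : fourier k t ≠ 0 := by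
  simp [fourier_apply]

variable (T K) in
/-- The linear map `P ↦ e_{-K} P(e_1)`, where `e_k = fourier k`, which identifies polynomials of
degree at most `2 * K` with trigonometric polynomials of degree at most `K`. -/
def ofPolynomial : ℂ[X] →ₗ[ℂ] C(AddCircle T, ℂ) where
  toFun P := fourier (-(K : ℤ)) * aeval (fourier 1) P
  map_add' P Q := by rw [map_add, mul_add]
  map_smul' c P := by rw [map_smul, mul_smul_comm, RingHom.id_apply]

@[simp]
lemma ofPolynomial_apply (P : ℂ[X]) (t : AddCircle T) :
    ofPolynomial T K P t = fourier (-(K : ℤ)) t * P.eval (fourier 1 t) :=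
  congrArg (fourier (-(K : ℤ)) t * ·) (aeval_continuousMap_apply P (fourier 1) t)

lemma ofPolynomial_X_pow (n : ℕ) : ofPolynomial T K (X ^ n) = fourier (n - K : ℤ) := by
  ext t
  simp only [ofPolynomial_apply, eval_X_pow]
  rw [fourier_one_pow, ← fourier_add, neg_add_eq_sub]

lemma map_ofPolynomial_degreeLT :
    (degreeLT ℂ (2 * K + 1)).map (ofPolynomial T K) = trigPoly T K := by
  classical
  rw [degreeLT_eq_span_X_pow, Submodule.map_span, trigPoly]
  congr 1
  ext p
  simp only [Finset.coe_image, Finset.coe_range, Set.mem_image, exists_exists_and_eq_and,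
    Set.mem_Iio, Set.mem_Icc, ofPolynomial_X_pow]
  constructor
  · rintro ⟨n, hn, rfl⟩
    exact ⟨n - K, by omega, rfl⟩
  · rintro ⟨k, hk, rfl⟩
    exact ⟨(k + K).toNat, by omega, congrArg fourier (by omega)⟩

theorem exists_finset_zeros_of_mem_trigPoly [Fact (0 < T)] {p : C(AddCircle T, ℂ)}
    (hp : p ∈ trigPoly T K) (hp0 : p ≠ 0) :
    ∃ Z : Finset (AddCircle T), Z.card ≤ 2 * K ∧ ∀ t, p t = 0 → t ∈ Z := by
  classical
  rw [← map_ofPolynomial_degreeLT] at hp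
  obtain ⟨P, hP, rfl⟩ := hp
  have hP0 : P ≠ 0 := fun h => hp0 (by rw [h, map_zero])
  have hdeg : P.natDegree < 2 * K + 1 :=
    (natDegree_lt_iff_degree_lt hP0).2 (mem_degreeLT.1 hP)
  refine ⟨P.roots.toFinset.preimage _ fourier_one_injective.injOn, ?_, fun t ht => ?_⟩
  · refine (Finset.card_le_card_of_injOn _ (fun t ht => ?_) fourier_one_injective.injOn).trans
      ((Multiset.toFinset_card_le _).trans (P.card_roots'.trans (Nat.lt_succ_iff.1 hdeg)))
    simpa using ht
  · rw [ofPolynomial_apply, mul_eq_zero, or_iff_right (fourier_ne_zero _ t)] at ht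
    simpa [hP0] using ht

lemma exists_mem_trigPoly_apply_ne_zero [Fact (0 < T)] {Z : Finset (AddCircle T)}
    (hZ : Z.card ≤ 2 * K + 1) {z : AddCircle T} (hz : z ∈ Z) :
    ∃ p ∈ trigPoly T K, p z ≠ 0 ∧ ∀ x ∈ Z, x ≠ z → p x = 0 := by
  classical
  have hinj : Set.InjOn (fun t : AddCircle T => fourier 1 t) Z := fourier_one_injective.injOn
  refine ⟨ofPolynomial T K (Lagrange.basis Z (fun t => fourier 1 t) z), ?_, ?_, fun x hx hxz => ?_⟩
  · rw [← map_ofPolynomial_degreeLT]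
    refine Submodule.mem_map_of_mem (mem_degreeLT.2 ?_)
    rw [Lagrange.degree_basis hinj hz]
    exact_mod_cast (Nat.sub_le_of_le_add hZ).trans_lt (Nat.lt_succ_self _)
  · rw [ofPolynomial_apply, Lagrange.eval_basis_self hinj hz, mul_one]
    exact fourier_ne_zero _ z
  · rw [ofPolynomial_apply, Lagrange.eval_basis_of_ne hxz.symm hx, mul_zero]

lemma exists_hasDerivAt_of_mem_trigPoly {p : C(AddCircle T, ℂ)} (hp : p ∈ trigPoly T K) :
    ∃ q ∈ trigPoly T K, ∀ x : ℝ, HasDerivAt (fun s : ℝ => p s) (q x) x := by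
  induction hp using Submodule.span_induction with
  | mem p hp =>
    obtain ⟨k, hk, rfl⟩ := hp
    exact ⟨(2 * π * I * k / T) • fourier k, (trigPoly T K).smul_mem _
      (fourier_mem_trigPoly (abs_le.2 hk)), hasDerivAt_fourier T k⟩
  | zero => exact ⟨0, zero_mem _, fun x => hasDerivAt_const x 0⟩
  | add p p' _ _ hp hp' =>
    obtain ⟨q, hq, hpq⟩ := hp
    obtain ⟨q', hq', hpq'⟩ := hp'
    exact ⟨q + q', add_mem hq hq', fun x => (hpq x).add (hpq' x)⟩
  | smul c p _ hp =>
    obtain ⟨q, hq, hpq⟩ := hp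
    exact ⟨c • q, Submodule.smul_mem _ c hq, fun x => (hpq x).const_mul c⟩

lemma exists_hasDerivAt_of_mem_realTrigPoly {p : C(AddCircle T, ℝ)} (hp : p ∈ realTrigPoly T K) :
    ∃ q : C(AddCircle T, ℝ), q ∈ realTrigPoly T K ∧
      ∀ x : ℝ, HasDerivAt (fun s : ℝ => p s) (q x) x := by
  obtain ⟨q, hq, hpq⟩ := exists_hasDerivAt_of_mem_trigPoly hp
  have hre (x : ℝ) : HasDerivAt (fun s : ℝ => p s) (q x).re x :=
    reCLM.hasFDerivAt.comp_hasDerivAt x (hpq x)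
  exact ⟨reMap q, reMap_mem_realTrigPoly hq, hre⟩

theorem exists_finset_extremal_or_const [Fact (0 < T)] {p : C(AddCircle T, ℝ)}
    (hp : p ∈ realTrigPoly T K) {M : ℝ} (hM : ‖p‖ ≤ M) :
    (∃ Z : Finset (AddCircle T), Z.card ≤ 2 * K ∧ ∀ t, |p t| = M → t ∈ Z) ∨
      ∃ c, ∀ t, p t = c := by
  obtain ⟨q, hq, hpq⟩ := exists_hasDerivAt_of_mem_realTrigPoly hp
  have hle (t : AddCircle T) : |p t| ≤ M := (p.norm_coe_le_norm t).trans hM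
  rcases eq_or_ne q 0 with rfl | hq0
  · refine .inr ⟨p 0, fun t => ?_⟩
    obtain ⟨x, rfl⟩ := QuotientAddGroup.mk_surjective t
    exact is_const_of_deriv_eq_zero (fun s => (hpq s).differentiableAt)
      (fun s => (hpq s).deriv) x 0
  · obtain ⟨Z, hZ, hqZ⟩ := exists_finset_zeros_of_mem_trigPoly hq
      ((map_ne_zero_iff ofRealMap ofRealMap_injective).2 hq0)
    refine .inl ⟨Z, hZ, fun t ht => hqZ t ?_⟩
    obtain ⟨x, rfl⟩ := QuotientAddGroup.mk_surjective t
    suffices h : q x = 0 from congrArg ofReal h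
    rcases eq_or_eq_neg_of_abs_eq ht with ht | ht
    · refine IsLocalMax.hasDerivAt_eq_zero (.of_forall fun s => ?_) (hpq x)
      exact (le_of_abs_le (hle s)).trans_eq ht.symm
    · refine IsLocalMin.hasDerivAt_eq_zero (.of_forall fun s => ?_) (hpq x)
      exact ht.trans_le (neg_le_of_abs_le (hle s))

end TrigPoly

section Uniqueness

lemma eq_zero_of_variation_compl_finset_eq_zero {X E : Type*} [MeasurableSpace X]
    [MeasurableSingletonClass X] [NormedAddCommGroup E] {u : VectorMeasure X E} {Z : Finset X}
    (hu : u.variation (Z : Set X)ᶜ = 0) (h : ∀ z ∈ Z, u {z} = 0) : u = 0 := by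
  have hsingleton (z : X) (hz : z ∈ Z) : u.variation {z} = 0 := by
    refine (VectorMeasure.variation_apply_eq_zero (measurableSet_singleton z)).2 fun t ht _ => ?_
    rcases Set.subset_singleton_iff_eq.1 ht with rfl | rfl
    exacts [u.empty, h z hz]
  rw [← VectorMeasure.variation_eq_zero, ← Measure.measure_univ_eq_zero,
    ← Set.union_compl_self (Z : Set X), measure_union_null_iff]
  refine ⟨?_, hu⟩
  rw [← Set.biUnion_of_singleton (Z : Set X), measure_biUnion_null_iff Z.countable_toSet]
  exact hsingleton

lemma eq_of_variation_compl_finset_eq_zero {X E : Type*} [MeasurableSpace X]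
    [MeasurableSingletonClass X] [NormedAddCommGroup E] {v w : VectorMeasure X E} {Z : Finset X}
    (hv : v.variation (Z : Set X)ᶜ = 0) (hw : w.variation (Z : Set X)ᶜ = 0)
    (h : ∀ z ∈ Z, v {z} = w {z}) : v = w := by
  refine sub_eq_zero.1 (eq_zero_of_variation_compl_finset_eq_zero (Z := Z) ?_ fun z hz => ?_)
  · exact le_bot_iff.1 ((VectorMeasure.variation_sub_le _).trans_eq (by simp [hv, hw]))
  · rw [_root_.sub_apply, h z hz, sub_self]

lemma integral_eq_smul_of_variation_compl_eq_zero {X E : Type*} [MeasurableSpace X]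
    [MeasurableSingletonClass X] [NormedAddCommGroup E] [NormedSpace ℝ E] [CompleteSpace E]
    {u : SignedMeasure X} {Z : Finset X} (hu : u.variation (Z : Set X)ᶜ = 0) {f : X → E} {z : X}
    (hf : ∀ x ∈ Z, x ≠ z → f x = 0) : ∫ᵛ x, f x ∂<•u = u {z} • f z := by
  have : f =ᵐ[u.variation] Set.indicator {z} fun _ => f z := by
    filter_upwards [mem_ae_iff.2 hu] with x hx
    by_cases hxz : x = z
    · simp [hxz]
    · simp [hxz, hf x hx hxz]
  rw [VectorMeasure.integral_congr_ae this]
  simp [VectorMeasure.integral_indicator]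

end Uniqueness

section Coefficients

variable {X : Type*} [TopologicalSpace X] [CompactSpace X] [MeasurableSpace X]
  [OpensMeasurableSpace X]

lemma clm_integral_comm {E F : Type*} [NormedAddCommGroup E] [NormedSpace ℝ E] [CompleteSpace E]
    [NormedAddCommGroup F] [NormedSpace ℝ F] [CompleteSpace F] (L : E →L[ℝ] F)
    (w : SignedMeasure X) (p : C(X, E)) : ∫ᵛ x, L (p x) ∂<•w = L (∫ᵛ x, p x ∂<•w) := by
  have hL := integral_eq_posPart_sub_negPart w ((L : C(E, F)).comp p)
  simp only [ContinuousMap.comp_apply] at hL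
  rw [integral_eq_posPart_sub_negPart, map_sub, ← L.integral_comp_comm, ← L.integral_comp_comm]
  exacts [hL, integrable_continuousMap _ p, integrable_continuousMap _ p]

lemma integral_ofRealMap (w : SignedMeasure X) (p : C(X, ℝ)) :
    ∫ᵛ t, ofRealMap p t ∂<•w = integralDual w p :=
  clm_integral_comm ofRealCLM w p

lemma integral_reMap (w : SignedMeasure X) (p : C(X, ℂ)) :
    integralDual w (reMap p) = (∫ᵛ t, p t ∂<•w).re :=
  clm_integral_comm reCLM w p

lemma integral_complex_smul (w : SignedMeasure X) (c : ℂ) (p : C(X, ℂ)) :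
    ∫ᵛ t, (c • p) t ∂<•w = c * ∫ᵛ t, p t ∂<•w :=
  clm_integral_comm (ContinuousLinearMap.mul ℝ ℂ c) w p

variable {T : ℝ} [Fact (0 < T)] {K : ℕ}

lemma integral_trigPoly_eq_iff {v w : SignedMeasure (AddCircle T)} :
    (∀ p ∈ trigPoly T K, ∫ᵛ t, p t ∂<•v = ∫ᵛ t, p t ∂<•w) ↔
      ∀ p ∈ realTrigPoly T K, integralDual v p = integralDual w p := by
  refine ⟨fun h p hp => ?_, fun h p hp => ?_⟩
  · simpa only [integral_ofRealMap, ofReal_inj] using h (ofRealMap p) hp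
  · have hre {q} (hq : q ∈ trigPoly T K) :
        (∫ᵛ t, q t ∂<•v).re = (∫ᵛ t, q t ∂<•w).re := by
      rw [← integral_reMap, ← integral_reMap, h _ (reMap_mem_realTrigPoly hq)]
    refine Complex.ext (hre hp) ?_
    have him := hre ((trigPoly T K).smul_mem (-I) hp)
    rw [integral_complex_smul, integral_complex_smul] at him
    simpa using him

lemma integral_fourier_eq_iff {v w : SignedMeasure (AddCircle T)} :
    (∀ k : ℤ, |k| ≤ K → ∫ᵛ t, fourier k t ∂<•v = ∫ᵛ t, fourier k t ∂<•w) ↔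
      ∀ p ∈ trigPoly T K, ∫ᵛ t, p t ∂<•v = ∫ᵛ t, p t ∂<•w := by
  refine ⟨fun h p hp => ?_, fun h k hk => h _ (fourier_mem_trigPoly hk)⟩
  induction hp using Submodule.span_induction with
  | mem p hp =>
    obtain ⟨k, hk, rfl⟩ := hp
    exact h k (abs_le.2 hk)
  | zero => simp
  | add p q _ _ hp hq =>
    simp only [ContinuousMap.add_apply]
    rw [VectorMeasure.integral_fun_add, VectorMeasure.integral_fun_add, hp, hq]
    all_goals exact integrable_continuousMap _ _
  | smul c p _ hp => rw [integral_complex_smul, integral_complex_smul, hp]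

theorem eq_of_integral_trigPoly_eq {v w : SignedMeasure (AddCircle T)}
    {Z : Finset (AddCircle T)} (hZ : Z.card ≤ 2 * K + 1)
    (hv : v.variation (Z : Set (AddCircle T))ᶜ = 0) (hw : w.variation (Z : Set (AddCircle T))ᶜ = 0)
    (h : ∀ p ∈ trigPoly T K, ∫ᵛ t, p t ∂<•v = ∫ᵛ t, p t ∂<•w) : v = w := by
  refine eq_of_variation_compl_finset_eq_zero hv hw fun z hz => ?_
  obtain ⟨p, hp, hpz, hpZ⟩ := exists_mem_trigPoly_apply_ne_zero hZ hz
  have hint := h p hp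
  rw [integral_eq_smul_of_variation_compl_eq_zero hv hpZ,
    integral_eq_smul_of_variation_compl_eq_zero hw hpZ] at hint
  exact smul_left_injective ℝ hpz hint

end Coefficients

section Fourier

variable {T : ℝ} [Fact (0 < T)]

lemma linearIndependent_fourier :
    LinearIndependent ℂ (fourier : ℤ → C(AddCircle T, ℂ)) :=
  LinearIndependent.of_comp (ContinuousMap.toLp 2 AddCircle.haarAddCircle ℂ).toLinearMap
    orthonormal_fourier.linearIndependent

lemma integral_fourier_haarAddCircle (n : ℤ) :
    ∫ t : AddCircle T, fourier n t ∂AddCircle.haarAddCircle = if n = 0 then 1 else 0 := by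
  split_ifs with h
  · simp [h]
  · exact integral_eq_zero_of_add_right_eq_neg (μ := AddCircle.haarAddCircle)
      (fourier_add_half_inv_index h Fact.out)

lemma haarAddCircle_compl_finset_pos (Z : Finset (AddCircle T)) :
    0 < AddCircle.haarAddCircle (Z : Set (AddCircle T))ᶜ := by
  have : Infinite (Set.Ico (0 : ℝ) (0 + T)) := (Set.Ico_infinite (by simp [Fact.out])).to_subtype
  have : Infinite (AddCircle T) := (AddCircle.equivIco T 0).infinite_iff.2 this
  obtain ⟨t, ht⟩ := Infinite.exists_notMem_finset Z
  exact Z.finite_toSet.isClosed.isOpen_compl.measure_pos _ ⟨t, ht⟩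

end Fourier

section LinearIsometry

variable {𝕜 V : Type*} [RCLike 𝕜] [NormedAddCommGroup V] [InnerProductSpace 𝕜 V]

lemma norm_eq_one_of_isometry_apply_eq_smul {U : V →ₗᵢ[𝕜] V} {a : 𝕜} {v : V} (hv : v ≠ 0)
    (h : U v = a • v) : ‖a‖ = 1 := by
  have := U.norm_map v
  rwa [h, norm_smul, mul_eq_right₀ (norm_ne_zero_iff.2 hv)] at this

lemma orthogonalFamily_eigenspace_isometry (U : V →ₗᵢ[𝕜] V) :
    OrthogonalFamily 𝕜 (fun a => Module.End.eigenspace U.toLinearMap a)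
      fun a => (Module.End.eigenspace U.toLinearMap a).subtypeₗᵢ := by
  intro a b hab ⟨v, hv⟩ ⟨w, hw⟩
  rw [Module.End.mem_eigenspace_iff] at hv hw
  have hv' : U v = a • v := hv
  have hw' : U w = b • w := hw
  change inner 𝕜 v w = 0
  by_contra hne
  have hnorm : ‖a‖ = 1 :=
    norm_eq_one_of_isometry_apply_eq_smul (fun h => hne (by rw [h, inner_zero_left])) hv'
  have hinner : (starRingEnd 𝕜 a * b) * inner 𝕜 v w = inner 𝕜 v w := by
    rw [mul_assoc, ← inner_smul_right, ← inner_smul_left, ← hv', ← hw', U.inner_map_map]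
  have hconj : starRingEnd 𝕜 a * b = 1 := (mul_eq_right₀ hne).1 hinner
  refine hab ?_
  calc a = a * (starRingEnd 𝕜 a * b) := by rw [hconj, mul_one]
    _ = b := by rw [← mul_assoc, RCLike.mul_conj, hnorm]; simp

lemma isSemisimple_isometry [FiniteDimensional 𝕜 V] (U : V →ₗᵢ[𝕜] V) :
    Module.End.IsSemisimple U.toLinearMap := by
  refine Module.End.isSemisimple_iff.2 fun p hp => ⟨pᗮ, ?_, p.isCompl_orthogonal⟩
  let U' : p →ₗᵢ[𝕜] p := ⟨U.toLinearMap.restrict hp, fun v => U.norm_map v⟩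
  intro w hw v hv
  obtain ⟨u, hu⟩ := (U'.toLinearIsometryEquiv rfl).surjective ⟨v, hv⟩
  have hUu : U u = v := congrArg Subtype.val hu
  rw [← hUu]
  exact (U.inner_map_map u w).trans (hw u u.2)

lemma exists_isometry_apply_eq_of_gram_eq {ι : Type*} [Finite ι] [FiniteDimensional 𝕜 V]
    {u v : ι → V} (h : gram 𝕜 u = gram 𝕜 v) : ∃ U : V →ₗᵢ[𝕜] V, ∀ i, U (u i) = v i := by
  classical
  have := Fintype.ofFinite ι
  let A := Fintype.linearCombination 𝕜 u
  let B := Fintype.linearCombination 𝕜 v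
  have hnorm : ∀ c, ‖A c‖ = ‖B c‖ := fun c => by
    rw [@norm_eq_sqrt_re_inner 𝕜, @norm_eq_sqrt_re_inner 𝕜]
    simp only [A, B, Fintype.linearCombination_apply, ← star_dotProduct_gram_mulVec, h]
  have hker : A.ker ≤ B.ker := fun c hc => by
    rw [LinearMap.mem_ker, ← norm_eq_zero] at hc ⊢
    rw [← hnorm, hc]
  let L : A.range →ₗᵢ[𝕜] V :=
    ⟨A.ker.liftQ B hker ∘ₗ A.quotKerEquivRange.symm.toLinearMap, by
      rintro ⟨_, c, rfl⟩
      have hc : A.quotKerEquivRange.symm ⟨A c, LinearMap.mem_range_self A c⟩ =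
          A.ker.mkQ c := A.quotKerEquivRange_symm_apply_image c _
      simp [hc, hnorm]⟩
  refine ⟨L.extend, fun i => ?_⟩
  have hA : A (Pi.single i 1) = u i := by simp [A]
  have hB : B (Pi.single i 1) = v i := by simp [B]
  have hL : L ⟨A (Pi.single i 1), LinearMap.mem_range_self A _⟩ = B (Pi.single i 1) := by
    simp [L]
  rw [← hA, ← hB, ← hL, ← L.extend_apply]

end LinearIsometry

section SpectralMeasure

variable {T : ℝ} [Fact (0 < T)]

lemma exists_fourier_neg_one_eq {c : ℂ} (hc : ‖c‖ = 1) :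
    ∃ t : AddCircle T, fourier (-1) t = c := by
  have hT : T ≠ 0 := (Fact.out : 0 < T).ne'
  obtain ⟨t, ht⟩ := (AddCircle.homeomorphCircle hT).surjective
    ⟨c, mem_sphere_zero_iff_norm.2 hc⟩
  refine ⟨-t, ?_⟩
  rw [fourier_apply, neg_smul_neg, one_smul, ← AddCircle.homeomorphCircle_apply hT,
    ht]

variable {V : Type*} [NormedAddCommGroup V] [InnerProductSpace ℂ V] [FiniteDimensional ℂ V]

theorem exists_measure_inner_iterate_eq (U : V →ₗᵢ[ℂ] V) (x : V) :
    ∃ (μ : Measure (AddCircle T)) (Z : Finset (AddCircle T)), IsFiniteMeasure μ ∧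
      μ (Z : Set (AddCircle T))ᶜ = 0 ∧
      ∀ n : ℕ, inner ℂ x (U^[n] x) = ∫ t, fourier (-(n : ℤ)) t ∂μ := by
  classical
  have hx : x ∈ ⨆ c, Module.End.eigenspace U.toLinearMap c := by
    rw [(isSemisimple_isometry U).iSup_eigenspace_eq_top]
    trivial
  obtain ⟨f, hf, hfx⟩ := (Submodule.mem_iSup_iff_exists_finsupp _ x).1 hx
  have hUf : ∀ c, U (f c) = c • f c := fun c => Module.End.mem_eigenspace_iff.1 (hf c)
  have hpow : ∀ (n : ℕ) c, U^[n] (f c) = c ^ n • f c := fun n c => by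
    induction n with
    | zero => simp
    | succ n ih => rw [Function.iterate_succ_apply', ih, map_smul, hUf, smul_smul, pow_succ]
  choose! t ht using fun c : ℂ => exists_fourier_neg_one_eq (T := T) (c := c)
  have htpow : ∀ (n : ℕ), ∀ c ∈ f.support, fourier (-(n : ℤ)) (t c) = c ^ n := fun n c hc => by
    rw [fourier_neg, ← fourier_one_pow, map_pow, ← fourier_neg,
      ht c (norm_eq_one_of_isometry_apply_eq_smul (Finsupp.mem_support_iff.1 hc) (hUf c))]
  refine ⟨∑ c ∈ f.support, ‖f c‖₊ ^ 2 • Measure.dirac (t c), f.support.image t,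
    inferInstance, ?_, fun n => ?_⟩
  · rw [Measure.finsetSum_apply]
    refine Finset.sum_eq_zero fun c hc => ?_
    have htc : t c ∉ ((f.support.image t : Finset (AddCircle T)) : Set (AddCircle T))ᶜ :=
      fun h => h (Finset.mem_coe.2 (Finset.mem_image_of_mem t hc))
    rw [Measure.smul_apply, Measure.dirac_apply, Set.indicator_of_notMem htc, smul_zero]
  calc inner ℂ x (U^[n] x) = inner ℂ (∑ c ∈ f.support, f c) (∑ c ∈ f.support, c ^ n • f c) := by
        rw [← U.coe_pow, ← hfx, Finsupp.sum, map_sum]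
        simp_rw [U.coe_pow, hpow]
    _ = ∑ c ∈ f.support, (‖f c‖ : ℂ) ^ 2 * c ^ n := by
        refine ((orthogonalFamily_eigenspace_isometry U).inner_sum (fun c => ⟨f c, hf c⟩)
          (fun c => c ^ n • ⟨f c, hf c⟩) f.support).trans ?_
        refine Finset.sum_congr rfl fun c _ => ?_
        rw [inner_smul_right, inner_self_eq_norm_sq_to_K, mul_comm]
        rfl
    _ = ∫ s, fourier (-(n : ℤ)) s ∂∑ c ∈ f.support, ‖f c‖₊ ^ 2 • Measure.dirac (t c) := by
        rw [integral_finsetSum_measure fun c _ => integrable_continuousMap _ _]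
        refine Finset.sum_congr rfl fun c hc => ?_
        rw [integral_smul_nnreal_measure, integral_dirac, htpow n c hc]
        simp [NNReal.smul_def]

end SpectralMeasure

section HermitianMatrix

variable {n : Type*} {T : Matrix n n ℂ}

open scoped MatrixOrder Matrix.Norms.L2Operator in
lemma exists_gram_eq_of_posSemidef [Fintype n] (hT : T.PosSemidef) :
    ∃ b : n → EuclideanSpace ℂ n, gram ℂ b = T := by
  classical
  obtain ⟨B, rfl⟩ := CStarAlgebra.nonneg_iff_eq_star_mul_self.1 hT.nonneg
  refine ⟨fun i => WithLp.toLp 2 fun r => B r i, ?_⟩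
  ext i j
  simp [gram_apply, PiLp.inner_apply, Matrix.mul_apply, mul_comm]

open scoped Pointwise in
lemma posDef_sub_smul_one [Fintype n] [DecidableEq n] (hT : T.IsHermitian) {r : ℝ}
    (hr : ∀ i, r < hT.eigenvalues i) : (T - r • 1).PosDef := by
  have hTr : (T - r • 1).IsHermitian := hT.sub (Matrix.isHermitian_one.smul (.all r))
  refine hTr.posDef_iff_eigenvalues_pos.2 fun i => ?_
  have hi : hTr.eigenvalues i ∈ spectrum ℝ T - {r} := by
    rw [spectrum.sub_singleton_eq, Algebra.algebraMap_eq_smul_one,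
      hTr.spectrum_real_eq_range_eigenvalues]
    exact Set.mem_range_self i
  rw [hT.spectrum_real_eq_range_eigenvalues] at hi
  obtain ⟨_, ⟨j, rfl⟩, _, rfl, hj⟩ := hi
  rw [← hj]
  exact sub_pos.2 (hr j)

lemma exists_pos_posDef_sub_smul_one [Finite n] [DecidableEq n] [Nonempty n] (hT : T.PosDef) :
    ∃ ε : ℝ, 0 < ε ∧ (T - ε • 1).PosDef := by
  have := Fintype.ofFinite n
  obtain ⟨i, hi⟩ := Finite.exists_min hT.1.eigenvalues
  have hpos := hT.eigenvalues_pos i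
  exact ⟨hT.1.eigenvalues i / 2, half_pos hpos,
    posDef_sub_smul_one hT.1 fun j => (half_lt_self hpos).trans_le (hi j)⟩

end HermitianMatrix

section BPC

variable {K : ℕ} {y : ℤ → ℂ} {v w : SignedMeasure Circle2pi}

lemma tvNorm_eq_variationReal (w : SignedMeasure Circle2pi) :
    tvNorm w = w.variation.real Set.univ := by
  rw [tvNorm, w.totalVariation_eq_variation, Measure.real]

lemma sFourierCoeff_eq_integral (w : SignedMeasure Circle2pi) (k : ℤ) :
    sFourierCoeff w k = ∫ᵛ t, fourier (-k) t ∂<•w :=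
  (integral_eq_posPart_sub_negPart w (fourier (-k))).symm

lemma sFourierCoeff_toSignedMeasure (μ : Measure Circle2pi) [IsFiniteMeasure μ] (k : ℤ) :
    sFourierCoeff μ.toSignedMeasure k = ∫ t, fourier (-k) t ∂μ := by
  rw [sFourierCoeff_eq_integral, VectorMeasure.integral_toSignedMeasure]

lemma sFourierCoeff_add (v w : SignedMeasure Circle2pi) (k : ℤ) :
    sFourierCoeff (v + w) k = sFourierCoeff v k + sFourierCoeff w k := by
  simp only [sFourierCoeff_eq_integral]
  exact VectorMeasure.integral_add_vectorMeasure (integrable_continuousMap _ _)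
    (integrable_continuousMap _ _)

lemma sFourierCoeff_smul (c : ℝ) (w : SignedMeasure Circle2pi) (k : ℤ) :
    sFourierCoeff (c • w) k = c * sFourierCoeff w k := by
  simp only [sFourierCoeff_eq_integral]
  exact VectorMeasure.integral_smul_vectorMeasure _ c

lemma Feasible.iff_integral_eq (hv : Feasible K y v) :
    Feasible K y w ↔ ∀ p ∈ trigPoly (2 * π) K, ∫ᵛ t, p t ∂<•w = ∫ᵛ t, p t ∂<•v := by
  rw [← integral_fourier_eq_iff]
  constructor
  · intro hw k hk
    have hk' : |-k| ≤ (K : ℤ) := by rwa [abs_neg]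
    simpa [sFourierCoeff_eq_integral] using (hw _ hk').trans (hv _ hk').symm
  · intro h k hk
    rw [← hv k hk, sFourierCoeff_eq_integral, sFourierCoeff_eq_integral]
    exact h _ (by rwa [abs_neg])

lemma Feasible.iff_integralDual_eq (hv : Feasible K y v) :
    Feasible K y w ↔ ∀ p ∈ realTrigPoly (2 * π) K, integralDual w p = integralDual v p :=
  hv.iff_integral_eq.trans integral_trigPoly_eq_iff

lemma Feasible.isBPCSolution (hw : Feasible K y w) {p : C(Circle2pi, ℝ)}
    (hp : p ∈ realTrigPoly (2 * π) K) (hp1 : ‖p‖ ≤ 1) (hwp : tvNorm w ≤ integralDual w p) :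
    IsBPCSolution K y w := by
  refine ⟨hw, fun v hv => hwp.trans ?_⟩
  rw [hv.iff_integralDual_eq.1 hw p hp, tvNorm_eq_variationReal]
  exact integralDual_le_variationReal v hp1

theorem Feasible.exists_certificate (hv : Feasible K y v) :
    (∃ w, IsBPCSolution K y w) ∧ ∃ p ∈ realTrigPoly (2 * π) K, ‖p‖ ≤ 1 ∧
      ∀ w, IsBPCSolution K y w → tvNorm w ≤ integralDual w p := by
  obtain ⟨p, hp, hp1, w, hwv, hw⟩ := exists_dual_certificate (realTrigPoly (2 * π) K) v
  have hwF : Feasible K y w := hv.iff_integralDual_eq.2 hwv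
  rw [← tvNorm_eq_variationReal] at hw
  refine ⟨⟨w, hwF.isBPCSolution hp hp1 (hwv p hp ▸ hw)⟩, p, hp, hp1, fun u hu => ?_⟩
  exact (hu.2 w hwF).trans (hw.trans_eq (hu.1.iff_integralDual_eq.1 hv p hp))

lemma Feasible.isBPCSolution_toSignedMeasure {μ : Measure Circle2pi} [IsFiniteMeasure μ]
    (hμ : Feasible K y μ.toSignedMeasure) : IsBPCSolution K y μ.toSignedMeasure := by
  refine hμ.isBPCSolution one_mem_realTrigPoly norm_one.le ?_
  rw [tvNorm_eq_variationReal, integralDual_toSignedMeasure, Measure.variation_toSignedMeasure]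
  simp

end BPC

section Toeplitz

variable {K : ℕ} {y : ℤ → ℂ} {μ : Measure Circle2pi} [IsFiniteMeasure μ]

lemma isHermitian_Ty (hy : ∀ k : ℤ, |k| ≤ (K : ℤ) → y (-k) = starRingEnd ℂ (y k)) :
    (Ty K y).IsHermitian := by
  ext i j
  have h := hy ((i : ℤ) - j) (by rw [abs_le]; omega)
  rw [neg_sub] at h
  exact h.symm

lemma Feasible.Ty_eq_gram (hμ : Feasible K y μ.toSignedMeasure) :
    Ty K y = gram ℂ fun j : Fin (K + 1) => ContinuousMap.toLp 2 μ ℂ (fourier (-(j : ℤ))) := by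
  ext i j
  rw [gram_apply, ContinuousMap.inner_toLp]
  simp_rw [← fourier_neg, ← fourier_add]
  refine (hμ (j - i) (by rw [abs_le]; omega)).symm.trans ?_
  rw [sFourierCoeff_toSignedMeasure]
  exact congrArg (fun k : ℤ => ∫ t, fourier k t ∂μ) (by ring)

/-- If `x ≠ 0` and `x* T_y x ≤ 0`, then `∫ |p|² dμ ≤ 0` for `p = ∑ x_j e_{-j}`, where `e_k` is
`fourier k`, so `μ` is concentrated on the zeros of `p`. -/
theorem exists_finset_forall_feasible_compl_eq_zero (hy : (Ty K y).IsHermitian)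
    (h : ¬(Ty K y).PosDef) :
    ∃ Z : Finset Circle2pi, Z.card ≤ 2 * K ∧ ∀ (μ : Measure Circle2pi) [IsFiniteMeasure μ],
      Feasible K y μ.toSignedMeasure → μ (Z : Set Circle2pi)ᶜ = 0 := by
  rw [Matrix.posDef_iff_dotProduct_mulVec] at h
  push Not at h
  obtain ⟨x, hx, hxT⟩ := h hy
  let p : C(Circle2pi, ℂ) := ∑ j : Fin (K + 1), x j • fourier (-(j : ℤ))
  have hp : p ∈ trigPoly (2 * π) K := Submodule.sum_smul_mem _ _ fun j _ =>
    fourier_mem_trigPoly (by rw [abs_le]; omega)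
  have hp0 : p ≠ 0 := fun hp => hx <| funext <| Fintype.linearIndependent_iff.1
    (linearIndependent_fourier.comp (fun j : Fin (K + 1) => -(j : ℤ)) fun i j hij => by
      simpa [Fin.val_inj] using hij) x hp
  obtain ⟨Z, hZ, hpZ⟩ := exists_finset_zeros_of_mem_trigPoly hp hp0
  refine ⟨Z, hZ, fun μ _ hμ => ?_⟩
  have hsum : ∑ j, x j • ContinuousMap.toLp 2 μ ℂ (fourier (-(j : ℤ))) =
      ContinuousMap.toLp 2 μ ℂ p := by
    simp only [p, map_sum, map_smul]
  rw [hμ.Ty_eq_gram, star_dotProduct_gram_mulVec, hsum, inner_self_eq_norm_sq_to_K] at hxT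
  have hpμ : ContinuousMap.toLp 2 μ ℂ p = 0 := by
    by_contra hne
    exact hxT (pow_pos (RCLike.ofReal_pos.2 (norm_pos_iff.2 hne)) 2)
  have hae : ∀ᵐ t ∂μ, p t = 0 := by
    filter_upwards [ContinuousMap.coeFn_toLp (p := 2) μ (𝕜 := ℂ) p,
      hpμ ▸ Lp.coeFn_zero ℂ 2 μ] with t h₁ h₂
    rw [← h₁, h₂, Pi.zero_apply]
  exact measure_mono_null (fun t ht h => ht (hpZ t h)) hae

end Toeplitz

section UniqueSolution

variable {K : ℕ} {y : ℤ → ℂ} {v w : SignedMeasure Circle2pi}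

lemma Ty_neg (K : ℕ) (y : ℤ → ℂ) : Ty K (-y) = -Ty K y := rfl

lemma Feasible.neg (hw : Feasible K y w) : Feasible K (-y) (-w) := fun k hk => by
  rw [← neg_one_smul ℝ w, sFourierCoeff_smul, hw k hk]
  simp

lemma tvNorm_neg (w : SignedMeasure Circle2pi) : tvNorm (-w) = tvNorm w := by
  rw [tvNorm, tvNorm, SignedMeasure.totalVariation_neg]

lemma IsBPCSolution.neg (hw : IsBPCSolution K y w) : IsBPCSolution K (-y) (-w) :=
  ⟨hw.1.neg, fun v hv => by
    rw [tvNorm_neg, ← tvNorm_neg v]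
    exact hw.2 _ (by simpa using hv.neg)⟩

lemma isBPCSolution_neg_iff : IsBPCSolution K (-y) (-w) ↔ IsBPCSolution K y w :=
  ⟨fun h => by simpa using h.neg, IsBPCSolution.neg⟩

lemma variation_compl_eq_zero_of_feasible {Z : Finset Circle2pi}
    (hZ : ∀ (μ : Measure Circle2pi) [IsFiniteMeasure μ],
      Feasible K y μ.toSignedMeasure → μ (Z : Set Circle2pi)ᶜ = 0) (hw : Feasible K y w)
    (hneg : w.toJordanDecomposition.negPart = 0) : w.variation (Z : Set Circle2pi)ᶜ = 0 := by
  refine variation_eq_zero_iff_jordan.2 ⟨hZ _ ?_, by simp [hneg]⟩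
  rwa [← eq_toSignedMeasure_posPart hneg]

theorem exists_finset_forall_certified_compl_eq_zero (hy : (Ty K y).IsHermitian)
    (hpos : ¬(Ty K y).PosDef) (hneg : ¬(-(Ty K y)).PosDef) {p : C(Circle2pi, ℝ)}
    (hp : p ∈ realTrigPoly (2 * π) K) (hp1 : ‖p‖ ≤ 1) :
    ∃ Z : Finset Circle2pi, Z.card ≤ 2 * K ∧ ∀ w, Feasible K y w → tvNorm w ≤ integralDual w p →
      w.variation (Z : Set Circle2pi)ᶜ = 0 := by
  have hae (w) (hwp : tvNorm w ≤ integralDual w p) :=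
    ae_eq_of_variationReal_le_integralDual hp1 (tvNorm_eq_variationReal w ▸ hwp)
  rcases exists_finset_extremal_or_const hp hp1 with ⟨Z, hZ, hpZ⟩ | ⟨c, hc⟩
  · refine ⟨Z, hZ, fun w _ hwp => variation_eq_zero_iff_jordan.2 ⟨?_, ?_⟩⟩
    · exact mem_ae_iff.1 ((hae w hwp).1.mono fun t ht => hpZ t (by simp [ht]))
    · exact mem_ae_iff.1 ((hae w hwp).2.mono fun t ht => hpZ t (by simp [ht]))
  simp only [hc] at hae
  by_cases hc1 : c = 1
  · obtain ⟨Z, hZ, hconc⟩ := exists_finset_forall_feasible_compl_eq_zero hy hpos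
    refine ⟨Z, hZ, fun w hw hwp => variation_compl_eq_zero_of_feasible hconc hw ?_⟩
    simpa [hc1, self_eq_neg] using (hae w hwp).2
  · rw [← Ty_neg] at hneg
    obtain ⟨Z, hZ, hconc⟩ := exists_finset_forall_feasible_compl_eq_zero (y := -y) hy.neg hneg
    refine ⟨Z, hZ, fun w hw hwp => ?_⟩
    rw [← VectorMeasure.variation_neg]
    refine variation_compl_eq_zero_of_feasible hconc hw.neg ?_
    simpa [SignedMeasure.toJordanDecomposition_neg, hc1] using (hae w hwp).1

theorem existsUnique_isBPCSolution (hv : Feasible K y v) (hy : (Ty K y).IsHermitian)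
    (hpos : ¬(Ty K y).PosDef) (hneg : ¬(-(Ty K y)).PosDef) : ∃! w, IsBPCSolution K y w := by
  obtain ⟨⟨w₀, hw₀⟩, p, hp, hp1, hcert⟩ := hv.exists_certificate
  obtain ⟨Z, hZ, hconc⟩ := exists_finset_forall_certified_compl_eq_zero hy hpos hneg hp hp1
  exact ⟨w₀, hw₀, fun w hw => eq_of_integral_trigPoly_eq (hZ.trans (Nat.le_succ _))
    (hconc w hw.1 (hcert w hw)) (hconc w₀ hw₀.1 (hcert w₀ hw₀)) (hw₀.1.iff_integral_eq.1 hw.1)⟩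

end UniqueSolution

section MomentProblem

variable {K : ℕ} {y : ℤ → ℂ}

/-- Write `T_y` as the Gram matrix of vectors `b_0, …, b_K`. Being Toeplitz means that the shift
`b_i ↦ b_{i+1}` preserves inner products, hence extends to a linear isometry, and the spectral
measure of `b_0` has the prescribed moments. -/
theorem exists_measure_feasible_of_posSemidef
    (hy : ∀ k : ℤ, |k| ≤ (K : ℤ) → y (-k) = starRingEnd ℂ (y k)) (hT : (Ty K y).PosSemidef) :
    ∃ (μ : Measure Circle2pi) (Z : Finset Circle2pi) (_ : IsFiniteMeasure μ),
      μ (Z : Set Circle2pi)ᶜ = 0 ∧ Feasible K y μ.toSignedMeasure := by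
  obtain ⟨b, hb⟩ := exists_gram_eq_of_posSemidef hT
  have hinner : ∀ i j, inner ℂ (b i) (b j) = y ((j : ℤ) - i) := fun i j => by
    rw [← gram_apply, hb, Ty, Matrix.of_apply]
  obtain ⟨U, hU⟩ := exists_isometry_apply_eq_of_gram_eq (𝕜 := ℂ)
    (u := fun i : Fin K => b i.castSucc) (v := fun i : Fin K => b i.succ) (by
      ext i j
      simp [gram_apply, hinner])
  have hiter : ∀ n (hn : n < K + 1), U^[n] (b 0) = b ⟨n, hn⟩ := fun n => by
    induction n with
    | zero => exact fun _ => rfl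
    | succ n ih =>
      intro hn
      rw [Function.iterate_succ_apply', ih (by omega)]
      exact hU ⟨n, by omega⟩
  obtain ⟨μ, Z, _, hZ, hμ⟩ := exists_measure_inner_iterate_eq (T := 2 * π) U (b 0)
  have hnat : ∀ n : ℕ, n ≤ K → ∫ t, fourier (-(n : ℤ)) t ∂μ = y n := fun n hn => by
    rw [← hμ, hiter n (by omega), hinner]
    simp
  refine ⟨μ, Z, inferInstance, hZ, fun k hk => ?_⟩
  rw [sFourierCoeff_toSignedMeasure]
  obtain ⟨n, rfl | rfl⟩ := k.eq_nat_or_neg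
  · exact hnat n (by simpa using hk)
  · have hn : n ≤ K := by simpa using hk
    rw [hy n (by simpa using hk), ← hnat n hn, ← integral_conj]
    simp_rw [← fourier_neg]

theorem exists_feasible_add_smul_haar_of_posSemidef
    (hy : ∀ k : ℤ, |k| ≤ (K : ℤ) → y (-k) = starRingEnd ℂ (y k)) {r : ℝ}
    (hT : (Ty K y - r • 1).PosSemidef) :
    ∃ (μ : Measure Circle2pi) (_ : IsFiniteMeasure μ),
      Feasible K y (μ.toSignedMeasure + r • AddCircle.haarAddCircle.toSignedMeasure) := by
  let y' : ℤ → ℂ := fun k => y k - if k = 0 then (r : ℂ) else 0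
  have hTy' : Ty K y' = Ty K y - r • 1 := by
    ext i j
    simp [Ty, y', Matrix.one_apply, sub_eq_zero, Fin.ext_iff, eq_comm]
  have hy' : ∀ k : ℤ, |k| ≤ (K : ℤ) → y' (-k) = starRingEnd ℂ (y' k) := fun k hk => by
    simp only [y', neg_eq_zero, map_sub, hy k hk]
    split_ifs <;> simp
  obtain ⟨μ, -, hfin, -, hμ⟩ := exists_measure_feasible_of_posSemidef hy' (hTy' ▸ hT)
  refine ⟨μ, hfin, fun k hk => ?_⟩
  rw [sFourierCoeff_add, sFourierCoeff_smul, hμ k hk, sFourierCoeff_toSignedMeasure,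
    integral_fourier_haarAddCircle]
  simp [y']

lemma exists_feasible (hy : ∀ k : ℤ, |k| ≤ (K : ℤ) → y (-k) = starRingEnd ℂ (y k)) :
    ∃ v, Feasible K y v := by
  obtain ⟨i, hi⟩ := Finite.exists_min (isHermitian_Ty hy).eigenvalues
  obtain ⟨μ, _, hμ⟩ := exists_feasible_add_smul_haar_of_posSemidef hy
    (posDef_sub_smul_one (isHermitian_Ty hy) fun j => (sub_one_lt _).trans_le (hi j)).posSemidef
  exact ⟨_, hμ⟩

/-- Some solution is finitely supported, while a small multiple of Haar measure can be split off
from another one. -/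
theorem not_posDef_of_existsUnique_isBPCSolution
    (hy : ∀ k : ℤ, |k| ≤ (K : ℤ) → y (-k) = starRingEnd ℂ (y k))
    (h : ∃! w, IsBPCSolution K y w) : ¬(Ty K y).PosDef := by
  intro hT
  obtain ⟨ε, hε, hTε⟩ := exists_pos_posDef_sub_smul_one hT
  obtain ⟨μ, Z, _, hμZ, hμ⟩ := exists_measure_feasible_of_posSemidef hy hT.posSemidef
  obtain ⟨ν, _, hν⟩ := exists_feasible_add_smul_haar_of_posSemidef hy hTε.posSemidef
  lift ε to NNReal using hε.le
  change Feasible K y (ν.toSignedMeasure + ε • AddCircle.haarAddCircle.toSignedMeasure) at hν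
  rw [← Measure.toSignedMeasure_smul, ← Measure.toSignedMeasure_add] at hν
  have heq := h.unique hμ.isBPCSolution_toSignedMeasure hν.isBPCSolution_toSignedMeasure
  rw [Measure.toSignedMeasure_eq_toSignedMeasure_iff] at heq
  rw [heq, Measure.add_apply, Measure.smul_apply, add_eq_zero] at hμZ
  exact smul_ne_zero (NNReal.coe_pos.1 hε).ne' (haarAddCircle_compl_finset_pos Z).ne' hμZ.2

end MomentProblem

/-- (BPC) has a unique solution if and only if `T_y` is neither positive definite nor
negative definite. -/
theorem unique_solution_iff_Ty_not_definite (Kc : ℕ) (hKc : 1 ≤ Kc) (y : ℤ → ℂ)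
    (hsym : ∀ k : ℤ, |k| ≤ (Kc : ℤ) → y (-k) = starRingEnd ℂ (y k)) :
    (∃! w : MeasureTheory.SignedMeasure Circle2pi, IsBPCSolution Kc y w) ↔
      (¬ (Ty Kc y).PosDef ∧ ¬ (-(Ty Kc y)).PosDef) := by
  constructor
  · intro h
    refine ⟨not_posDef_of_existsUnique_isBPCSolution hsym h, ?_⟩
    rw [← Ty_neg]
    refine not_posDef_of_existsUnique_isBPCSolution (fun k hk => by simp [hsym k hk]) ?_
    refine ((Equiv.neg _).existsUnique_congr fun w => ?_).1 h
    exact isBPCSolution_neg_iff.symm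
  · rintro ⟨hpos, hneg⟩
    obtain ⟨v, hv⟩ := exists_feasible hsym
    exact existsUnique_isBPCSolution hv (isHermitian_Ty hsym) hpos hneg
end
end

section
/- (Carathéodory–Fejér–Pisarenko decomposition, rank-deficient case.) Let n ≥ 1 and let T ∈ ℂ^{(n+1)×(n+1)} be a Hermitian Toeplitz matrix ((T)_{i,j} = c_{j−i} for some sequence c with c_{−m} = conj(c_m)) that is positive semidefinite with r := rank(T) ≤ n. Then there exist pairwise distinct x_1,…,x_r ∈ 𝕋 = ℝ/2πℤ and strictly positive reals a_1,…,a_r such that T = V D V*, where V ∈ ℂ^{(n+1)×r} has entries V_{m,k} = e^{i m x_k} (0 ≤ m ≤ n, 1 ≤ k ≤ r) and D is the diagonal matrix with diagonal (a_1,…,a_r); moreover the sets {x_1,…,x_r} and the associated weights are unique (the decomposition is unique up to permutation of the indices). -/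
open MeasureTheory Complex Real Matrix
open scoped Real ComplexOrder

noncomputable section

/-- The Vandermonde matrix `V_x ∈ ℂ^{(n+1)×K}` with entries `(V_x)_{m,k} = e^{i m x_k}`. -/
noncomputable def Vand (n K : ℕ) (x : Fin K → Circle2pi) : Matrix (Fin (n + 1)) (Fin K) ℂ :=
  Matrix.of fun (m : Fin (n + 1)) (k : Fin K) => fourier (m : ℤ) (x k)

/-!
A positive semidefinite matrix `T` of rank `r` is the Gram matrix of vectors `v₀, …, vₙ ∈ ℂʳ`, and
`T` is Toeplitz exactly when the shift `vᵢ ↦ vᵢ₊₁` preserves inner products. The shift then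
extends to a unitary operator `U` of `ℂʳ` with `vᵢ = Uⁱ v₀`. Expanding the `vᵢ` in an orthonormal
eigenbasis of `U` gives `T = V D V*`: the nodes come from the eigenvalues of `U`, the weights are
the squared moduli of the coordinates of `v₀`. Since `T` has rank `r`, the `r` columns of `V` must
be independent and `D` invertible, so the nodes are distinct and the weights positive.

For uniqueness, the columns of `V` span the column space of `T` in any such decomposition. As
`r + 1 ≤ n + 1` Fourier vectors with distinct nodes are independent, this space contains no Fourier
vectors other than the columns of `V`, which determines the nodes; the weights are the
coefficients of the first column of `T` in the columns of `V`.
-/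

open Module (finrank)
open scoped InnerProductSpace MatrixOrder ComplexStarModule

section InnerProductSpace

variable {𝕜 E ι : Type*} [RCLike 𝕜] [NormedAddCommGroup E] [InnerProductSpace 𝕜 E]

theorem norm_linearCombination_eq_of_gram_eq {F : Type*} [NormedAddCommGroup F]
    [InnerProductSpace 𝕜 F] {v : ι → E} {w : ι → F} (h : gram 𝕜 v = gram 𝕜 w) (c : ι →₀ 𝕜) :
    ‖Finsupp.linearCombination 𝕜 v c‖ = ‖Finsupp.linearCombination 𝕜 w c‖ := by
  have hinner (i j : ι) : ⟪v i, v j⟫_𝕜 = ⟪w i, w j⟫_𝕜 := congrFun₂ h i j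
  simp only [@norm_eq_sqrt_re_inner 𝕜, Finsupp.linearCombination_apply, Finsupp.sum_inner,
    Finsupp.inner_sum, inner_smul_left, inner_smul_right, hinner]

theorem repr_apply_of_forall_apply_eq_smul [Fintype ι] (b : OrthonormalBasis ι 𝕜 E)
    {T : E →ₗ[𝕜] E} {μ : ι → 𝕜} (hT : ∀ k, T (b k) = μ k • b k) (y : E) (k : ι) :
    b.repr (T y) k = μ k * b.repr y k := by
  classical
  conv_lhs => rw [← b.sum_repr y]
  simp [hT, smul_smul, Pi.single_apply, mul_comm]

theorem repr_iterate_apply_of_forall_apply_eq_smul [Fintype ι] (b : OrthonormalBasis ι 𝕜 E)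
    {T : E →ₗ[𝕜] E} {μ : ι → 𝕜} (hT : ∀ k, T (b k) = μ k • b k) (m : ℕ) (y : E) (k : ι) :
    b.repr (T^[m] y) k = μ k ^ m * b.repr y k := by
  induction m with
  | zero => simp
  | succ m hm =>
    rw [Function.iterate_succ_apply', repr_apply_of_forall_apply_eq_smul b hT, hm, pow_succ',
      mul_assoc]

variable [FiniteDimensional 𝕜 E]

theorem exists_linearIsometry_apply_eq_of_gram_eq {v w : ι → E} (h : gram 𝕜 v = gram 𝕜 w) :
    ∃ U : E →ₗᵢ[𝕜] E, ∀ i, U (v i) = w i := by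
  let F := Finsupp.linearCombination 𝕜 v
  let G := Finsupp.linearCombination 𝕜 w
  have hnorm (c : ι →₀ 𝕜) : ‖F c‖ = ‖G c‖ := norm_linearCombination_eq_of_gram_eq h c
  obtain ⟨s, hs⟩ := F.rangeRestrict.exists_rightInverse_of_surjective F.range_rangeRestrict
  have hFs (y : F.range) : F (s y) = y := congrArg Subtype.val (LinearMap.congr_fun hs y)
  -- `F c ↦ G c` is well defined and isometric since `‖F c‖ = ‖G c‖`
  let L : F.range →ₗᵢ[𝕜] E := ⟨G ∘ₗ s, fun y => by
    rw [LinearMap.comp_apply, ← hnorm, hFs, Submodule.coe_norm]⟩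
  have hL (c : ι →₀ 𝕜) : L (F.rangeRestrict c) = G c := by
    rw [← sub_eq_zero, ← norm_eq_zero]
    change ‖G (s (F.rangeRestrict c)) - G c‖ = 0
    rw [← map_sub, ← hnorm, map_sub, hFs, LinearMap.codRestrict_apply, sub_self, norm_zero]
  refine ⟨L.extend, fun i => ?_⟩
  have hi := hL (Finsupp.single i 1)
  rw [← L.extend_apply] at hi
  simpa [F, G] using hi

theorem exists_linearIsometry_iterate_eq {n : ℕ} {v : Fin (n + 1) → E}
    (hv : ∀ i j : Fin n, ⟪v i.succ, v j.succ⟫_𝕜 = ⟪v i.castSucc, v j.castSucc⟫_𝕜) :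
    ∃ U : E →ₗᵢ[𝕜] E, ∀ i, v i = U^[i] (v 0) := by
  obtain ⟨U, hU⟩ := exists_linearIsometry_apply_eq_of_gram_eq (𝕜 := 𝕜)
    (v := v ∘ Fin.castSucc) (w := v ∘ Fin.succ) (Matrix.ext fun i j => (hv i j).symm)
  refine ⟨U, Fin.induction rfl fun i hi => ?_⟩
  rw [Fin.val_succ, Function.iterate_succ_apply', ← Fin.val_castSucc i, ← hi]
  exact (hU i).symm

theorem exists_orthonormalBasis_mem_of_isInternal [DecidableEq ι] {V : ι → Submodule 𝕜 E}
    (hV : DirectSum.IsInternal V)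
    (horth : OrthogonalFamily 𝕜 (fun i => V i) fun i => (V i).subtypeₗᵢ) {n : ℕ}
    (hn : finrank 𝕜 E = n) :
    ∃ (b : OrthonormalBasis (Fin n) 𝕜 E) (f : Fin n → ι), ∀ k, b k ∈ V (f k) := by
  let _ : Fintype {i // V i ≠ ⊥} :=
    (WellFoundedGT.finite_ne_bot_of_iSupIndep hV.submodule_iSupIndep).fintype
  have hV' := DirectSum.isInternal_ne_bot_iff.2 hV
  have horth' := horth.comp (Subtype.val_injective (p := fun i => V i ≠ ⊥))
  exact ⟨hV'.subordinateOrthonormalBasis hn horth', _, fun k =>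
    hV'.subordinateOrthonormalBasis_subordinate hn k horth'⟩

end InnerProductSpace

theorem exists_orthonormalBasis_apply_eq_smul {E : Type*} [NormedAddCommGroup E]
    [InnerProductSpace ℂ E] [FiniteDimensional ℂ E] (T : E →L[ℂ] E) [IsStarNormal T] {n : ℕ}
    (hn : finrank ℂ E = n) :
    ∃ (b : OrthonormalBasis (Fin n) ℂ E) (μ : Fin n → ℂ), ∀ k, T (b k) = μ k • b k := by
  classical
  let A : E →L[ℂ] E := ℜ T
  let B : E →L[ℂ] E := ℑ T
  have hA : (A : E →ₗ[ℂ] E).IsSymmetric := (ℜ T).2.isSymmetric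
  have hB : (B : E →ₗ[ℂ] E).IsSymmetric := (ℑ T).2.isSymmetric
  have hAB : Commute (A : E →ₗ[ℂ] E) (B : E →ₗ[ℂ] E) :=
    (Commute.realPart_imaginaryPart T).map ContinuousLinearMap.toLinearMapRingHom
  obtain ⟨b, f, hb⟩ := exists_orthonormalBasis_mem_of_isInternal
    (hA.directSum_isInternal_of_commute hB hAB) (hA.orthogonalFamily_eigenspace_inf_eigenspace hB)
    hn
  refine ⟨b, fun k => (f k).2 + I * (f k).1, fun k => ?_⟩
  have hAk : A (b k) = (f k).2 • b k := Module.End.mem_eigenspace_iff.1 (hb k).1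
  have hBk : B (b k) = (f k).1 • b k := Module.End.mem_eigenspace_iff.1 (hb k).2
  calc T (b k) = (A + I • B) (b k) := by rw [realPart_add_I_smul_imaginaryPart]
    _ = ((f k).2 + I * (f k).1) • b k := by simp [hAk, hBk, add_smul, mul_smul]

theorem exists_orthonormalBasis_linearIsometry_apply_eq_smul {E : Type*} [NormedAddCommGroup E]
    [InnerProductSpace ℂ E] [FiniteDimensional ℂ E] (U : E →ₗᵢ[ℂ] E) {n : ℕ}
    (hn : finrank ℂ E = n) :
    ∃ (b : OrthonormalBasis (Fin n) ℂ E) (μ : Fin n → ℂ),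
      (∀ k, ‖μ k‖ = 1) ∧ ∀ k, U (b k) = μ k • b k := by
  let u : unitary (E →L[ℂ] E) := Unitary.linearIsometryEquiv.symm (U.toLinearIsometryEquiv rfl)
  obtain ⟨b, μ, hμ⟩ := exists_orthonormalBasis_apply_eq_smul (u : E →L[ℂ] E) hn
  replace hμ (k : Fin n) : U (b k) = μ k • b k := hμ k
  exact ⟨b, μ, fun k => by simpa [norm_smul] using (congrArg norm (hμ k)).symm, hμ⟩

theorem exists_gram_eq_of_posSemidef_s16 {𝕜 m : Type*} [RCLike 𝕜] [Fintype m]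
    {T : Matrix m m 𝕜} (hT : T.PosSemidef) :
    ∃ v : m → EuclideanSpace 𝕜 (Fin T.rank), gram 𝕜 v = T := by
  classical
  obtain ⟨B, hB⟩ := CStarAlgebra.nonneg_iff_eq_star_mul_self.mp hT.nonneg
  rw [star_eq_conjTranspose] at hB
  let L := toEuclideanLin B
  let std := (EuclideanSpace.basisFun m 𝕜).toBasis
  have hL : finrank 𝕜 L.range = T.rank := by
    rw [hB, rank_conjTranspose_mul_self, B.rank_eq_finrank_range_toLin std std,
      ← toEuclideanLin_eq_toLin_orthonormal]
  let e := ((stdOrthonormalBasis 𝕜 L.range).reindex (finCongr hL)).repr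
  refine ⟨fun i => e (L.rangeRestrict (EuclideanSpace.single i 1)), Matrix.ext fun i j => ?_⟩
  rw [gram_apply, e.inner_map_map, Submodule.coe_inner, hB]
  simp [L, Matrix.mul_apply, PiLp.inner_apply, toLpLin_apply, mul_comm]

section Rank

variable {m ι p K : Type*} [Fintype ι] [Fintype p] [Field K] {M : Matrix m p K}

theorem linearIndependent_col_of_eq_mul_of_rank_eq_card [Finite m] {A : Matrix m ι K}
    {B : Matrix ι p K} (h : M = A * B) (hM : M.rank = Fintype.card ι) :
    LinearIndependent K A.col := by
  have := Fintype.ofFinite m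
  rw [linearIndependent_iff_card_le_finrank_span, Set.finrank, ← rank_eq_finrank_span_cols, ← hM, h]
  exact rank_mul_le_left A B

theorem span_range_col_eq_of_eq_mul_of_rank_eq_card [Finite m] {A : Matrix m ι K}
    {B : Matrix ι p K} (h : M = A * B) (hM : M.rank = Fintype.card ι) :
    Submodule.span K (Set.range M.col) = Submodule.span K (Set.range A.col) := by
  rw [← range_mulVecLin, ← range_mulVecLin]
  refine Submodule.eq_of_le_of_finrank_le ?_ ?_
  · rw [h, mulVecLin_mul]
    exact LinearMap.range_comp_le_range _ _
  · change A.rank ≤ M.rank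
    exact hM ▸ rank_le_card_width A

theorem ne_zero_of_eq_mul_diagonal_mul_of_rank_eq_card [DecidableEq ι] {A : Matrix m ι K}
    {B : Matrix ι p K} {d : ι → K} (h : M = A * diagonal d * B) (hM : M.rank = Fintype.card ι)
    (k : ι) : d k ≠ 0 := by
  classical
  by_contra hk
  have hlt : Fintype.card {i // d i ≠ 0} < Fintype.card ι := Fintype.card_subtype_lt (not_not.2 hk)
  refine hlt.not_ge ?_
  calc Fintype.card ι = (A * diagonal d * B).rank := by rw [← hM, h]
    _ ≤ (A * diagonal d).rank := rank_mul_le_left _ _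
    _ ≤ (diagonal d).rank := rank_mul_le_right _ _
    _ = Fintype.card {i // d i ≠ 0} := Matrix.rank_diagonal d

end Rank

theorem exists_fourier_eq_pow {z : ℂ} (hz : ‖z‖ = 1) :
    ∃ x : Circle2pi, ∀ m : ℕ, fourier (m : ℤ) x = z ^ m := by
  obtain ⟨x, hx⟩ := (AddCircle.homeomorphCircle two_pi_pos.ne').surjective
    ⟨z, mem_sphere_zero_iff_norm.2 hz⟩
  rw [AddCircle.homeomorphCircle_apply] at hx
  have hxz : (x.toCircle : ℂ) = z := congrArg Subtype.val hx
  refine ⟨x, fun m => ?_⟩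
  rw [fourier_apply, natCast_zsmul, AddCircle.toCircle_nsmul, Circle.coe_pow, hxz]

/-- The vector `(1, e^{ix}, …, e^{inx})`, i.e. a single column of the Vandermonde matrix `Vand`. -/
def fourierVec (n : ℕ) (x : Circle2pi) : Fin (n + 1) → ℂ :=
  fun m => fourier (m : ℤ) x

section Vandermonde

variable {n K : ℕ} {x : Fin K → Circle2pi}

theorem vand_col : (Vand n K x).col = fourierVec n ∘ x :=
  rfl

theorem linearIndependent_fourierVec (hx : Function.Injective x) (hK : K ≤ n + 1) :
    LinearIndependent ℂ (fourierVec n ∘ x) := by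
  let z (k : Fin K) : ℂ := AddCircle.toCircle (x k)
  have hz : Function.Injective z :=
    Circle.coe_injective.comp ((AddCircle.injective_toCircle two_pi_pos.ne').comp hx)
  have hrow : LinearMap.funLeft ℂ ℂ (Fin.castLE hK) ∘ fourierVec n ∘ x = (vandermonde z).row := by
    ext k m
    simp [z, fourierVec, LinearMap.funLeft_apply, vandermonde_apply, AddCircle.toCircle_nsmul,
      fourier_apply]
  refine .of_comp (LinearMap.funLeft ℂ ℂ (Fin.castLE hK)) ?_
  rw [hrow]
  exact linearIndependent_rows_of_det_ne_zero (det_vandermonde_ne_zero_iff.2 hz)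

theorem mem_range_of_fourierVec_mem_span (hx : Function.Injective x) (hK : K ≤ n) {y : Circle2pi}
    (hy : fourierVec n y ∈ Submodule.span ℂ (Set.range (fourierVec n ∘ x))) :
    y ∈ Set.range x := by
  by_contra hyx
  have hli := linearIndependent_fourierVec (Fin.cons_injective_iff.2 ⟨hyx, hx⟩)
    (Nat.succ_le_succ hK)
  rw [Fin.comp_cons, linearIndependent_finCons] at hli
  exact hli.2 hy

theorem vand_mul_diagonal_mul_conjTranspose_col_zero (d : Fin K → ℂ) :
    (Vand n K x * diagonal d * (Vand n K x)ᴴ).col 0 = Vand n K x *ᵥ d := by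
  ext i
  rw [col_apply, Matrix.mul_apply]
  simp [mul_diagonal, mulVec, dotProduct, Vand]

theorem injective_of_linearIndependent_vand_col (h : LinearIndependent ℂ (Vand n K x).col) :
    Function.Injective x :=
  .of_comp (f := fourierVec n) h.injective

end Vandermonde

theorem exists_eq_vand_mul_diagonal_mul_conjTranspose {n : ℕ}
    {T : Matrix (Fin (n + 1)) (Fin (n + 1)) ℂ} (hpsd : T.PosSemidef)
    (hT : ∀ i j : Fin n, T i.succ j.succ = T i.castSucc j.castSucc) :
    ∃ (x : Fin T.rank → Circle2pi) (a : Fin T.rank → ℝ), (∀ k, 0 ≤ a k) ∧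
      T = Vand n T.rank x * diagonal (fun k => (a k : ℂ)) * (Vand n T.rank x)ᴴ := by
  obtain ⟨v, hv⟩ := exists_gram_eq_of_posSemidef_s16 hpsd
  have hTv (i j : Fin (n + 1)) : T i j = ⟪v i, v j⟫_ℂ := congrFun₂ hv.symm i j
  obtain ⟨U, hU⟩ := exists_linearIsometry_iterate_eq (𝕜 := ℂ) fun i j => by
    rw [← hTv, ← hTv, hT]
  obtain ⟨b, μ, hnorm, hμ⟩ := exists_orthonormalBasis_linearIsometry_apply_eq_smul U
    finrank_euclideanSpace_fin
  have hrepr (i : Fin (n + 1)) (k) : b.repr (v i) k = μ k ^ (i : ℕ) * b.repr (v 0) k := by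
    rw [hU]
    exact repr_iterate_apply_of_forall_apply_eq_smul b (T := U.toLinearMap) hμ i (v 0) k
  -- `inner` is conjugate linear in its first argument, so the `k`-th node comes from `star (μ k)`
  choose x hx using fun k => exists_fourier_eq_pow ((norm_star (μ k)).trans (hnorm k))
  refine ⟨x, fun k => ‖b.repr (v 0) k‖ ^ 2, fun k => by positivity, Matrix.ext fun i j => ?_⟩
  rw [hTv, ← b.repr.inner_map_map, PiLp.inner_apply, Matrix.mul_apply]
  refine Finset.sum_congr rfl fun k _ => ?_
  rw [mul_diagonal, conjTranspose_apply, Vand, of_apply, of_apply, hx, hx, hrepr i k,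
    hrepr j k]
  simp [← Complex.conj_mul']
  ring

theorem exists_perm_of_eq_vand_mul_diagonal_mul_conjTranspose {n K : ℕ} (hK : K ≤ n)
    {T : Matrix (Fin (n + 1)) (Fin (n + 1)) ℂ} (hrank : T.rank = K)
    {x x' : Fin K → Circle2pi} {a a' : Fin K → ℂ}
    (h : T = Vand n K x * diagonal a * (Vand n K x)ᴴ)
    (h' : T = Vand n K x' * diagonal a' * (Vand n K x')ᴴ) :
    ∃ σ : Equiv.Perm (Fin K), x' = x ∘ σ ∧ a' = a ∘ σ := by
  have hcard : T.rank = Fintype.card (Fin K) := hrank.trans (Fintype.card_fin K).symm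
  have hmul := h.trans (Matrix.mul_assoc _ _ _)
  have hmul' := h'.trans (Matrix.mul_assoc _ _ _)
  have hli := linearIndependent_col_of_eq_mul_of_rank_eq_card hmul hcard
  have hli' := linearIndependent_col_of_eq_mul_of_rank_eq_card hmul' hcard
  have hx := injective_of_linearIndependent_vand_col hli
  have hx' := injective_of_linearIndependent_vand_col hli'
  have hspan : Submodule.span ℂ (Set.range (Vand n K x').col) =
      Submodule.span ℂ (Set.range (Vand n K x).col) :=
    (span_range_col_eq_of_eq_mul_of_rank_eq_card hmul' hcard).symm.trans
      (span_range_col_eq_of_eq_mul_of_rank_eq_card hmul hcard)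
  have hmem (k : Fin K) : x' k ∈ Set.range x := by
    refine mem_range_of_fourierVec_mem_span hx hK ?_
    rw [← vand_col, ← hspan]
    exact Submodule.subset_span ⟨k, rfl⟩
  choose f hf using hmem
  obtain rfl : x ∘ f = x' := funext hf
  let σ := Equiv.ofBijective f (Finite.injective_iff_bijective.1 hx'.of_comp)
  refine ⟨σ, rfl, mulVec_injective_iff.2 hli' ?_⟩
  calc Vand n K (x ∘ σ) *ᵥ a' = Vand n K x *ᵥ a := by
        rw [← vand_mul_diagonal_mul_conjTranspose_col_zero,
          ← vand_mul_diagonal_mul_conjTranspose_col_zero, ← h]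
        exact congrArg (col · 0) h'.symm
    _ = (Vand n K x).submatrix id σ *ᵥ (a ∘ σ) := by
        simp [submatrix_mulVec_equiv, Function.comp_assoc]
    _ = Vand n K (x ∘ σ) *ᵥ (a ∘ σ) := rfl

/-- Carathéodory–Fejér–Pisarenko decomposition, rank-deficient case: a positive
semidefinite Hermitian Toeplitz matrix `T` of rank `r ≤ n` decomposes uniquely (up to a
permutation of the indices) as `T = V D V*` with `V` a Vandermonde matrix built from `r`
pairwise distinct points of `𝕋` and `D` diagonal with strictly positive entries. -/
theorem cfp_decomposition_rank_deficient (n : ℕ) (hn : 1 ≤ n) (c : ℤ → ℂ)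
    (hsym : ∀ m : ℤ, |m| ≤ (n : ℤ) → c (-m) = starRingEnd ℂ (c m))
    (T : Matrix (Fin (n + 1)) (Fin (n + 1)) ℂ)
    (hT : T = Matrix.of fun (i j : Fin (n + 1)) => c ((j : ℤ) - (i : ℤ)))
    (hpsd : T.PosSemidef) (hrank : T.rank ≤ n) :
    ∃ (x : Fin T.rank → Circle2pi) (a : Fin T.rank → ℝ),
      Function.Injective x ∧ (∀ k, 0 < a k) ∧
      T = Vand n T.rank x * Matrix.diagonal (fun k => (a k : ℂ)) * (Vand n T.rank x)ᴴ ∧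
      ∀ (x' : Fin T.rank → Circle2pi) (a' : Fin T.rank → ℝ),
        Function.Injective x' → (∀ k, 0 < a' k) →
        T = Vand n T.rank x' * Matrix.diagonal (fun k => (a' k : ℂ)) *
              (Vand n T.rank x')ᴴ →
        ∃ σ : Equiv.Perm (Fin T.rank), x' = x ∘ σ ∧ a' = a ∘ σ := by
  have hcard : T.rank = Fintype.card (Fin T.rank) := (Fintype.card_fin _).symm
  have htoep (i j : Fin n) : T i.succ j.succ = T i.castSucc j.castSucc := by simp [hT]
  obtain ⟨x, a, ha, hxa⟩ := exists_eq_vand_mul_diagonal_mul_conjTranspose hpsd htoep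
  have hli := linearIndependent_col_of_eq_mul_of_rank_eq_card
    (hxa.trans (Matrix.mul_assoc _ _ _)) hcard
  have ha0 (k) : (a k : ℂ) ≠ 0 := ne_zero_of_eq_mul_diagonal_mul_of_rank_eq_card hxa hcard k
  refine ⟨x, a, injective_of_linearIndependent_vand_col hli,
    fun k => (ha k).lt_of_ne' (ofReal_ne_zero.1 (ha0 k)), hxa, fun x' a' _ _ hxa' => ?_⟩
  obtain ⟨σ, hx', ha'⟩ :=
    exists_perm_of_eq_vand_mul_diagonal_mul_conjTranspose hrank rfl hxa hxa'
  exact ⟨σ, hx', funext fun k => ofReal_injective (congrFun ha' k)⟩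
end
end

section
/- (Carathéodory–Fejér–Pisarenko decomposition, full-rank case.) Let n ≥ 1 and let T ∈ ℂ^{(n+1)×(n+1)} be a Hermitian Toeplitz matrix that is positive definite. Then for every x₀ ∈ 𝕋 = ℝ/2πℤ there exist pairwise distinct x_1,…,x_{n+1} ∈ 𝕋 with x_1 = x₀ and strictly positive reals a_1,…,a_{n+1} such that T = V D V*, where V ∈ ℂ^{(n+1)×(n+1)} has entries V_{m,k} = e^{i m x_k} (0 ≤ m ≤ n, 1 ≤ k ≤ n+1) and D is the diagonal matrix with diagonal (a_1,…,a_{n+1}). -/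
open MeasureTheory Complex Real Matrix
open scoped Real ComplexOrder

noncomputable section

/-!
The matrix `T` defines an inner product `⟨X ^ i, X ^ j⟩ = c (i - j)` on polynomials of degree at
most `n`, extended to all polynomials so that multiplication by `X` stays isometric. By a dimension
count some nonzero `ω` of degree at most `n + 1` vanishes at `ζ = e ^ (i x₀)` and is orthogonal to
`X, …, X ^ n`.

If `ω = (X - ζ) (X - w) s`, orthogonality to `X s` gives
`⟨s, (X - ζ) s⟩ = w ⟨X s, (X - ζ) s⟩`, while `⟨X s, (X - ζ) s⟩ = -ζ conj ⟨s, (X - ζ) s⟩` because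
`|ζ| = 1`; both are nonzero, so `|w| = 1`. If `ω = (X - w) q` with `|w| = 1`, then `q` is orthogonal
to every polynomial of degree at most `n` vanishing at `w`. Hence `w` is a simple root, as otherwise
`⟨q, q⟩ = 0`, and the Lagrange polynomials at the roots of `ω` are pairwise orthogonal. Expanding
`⟨X ^ j, X ^ i⟩` in this orthogonal basis is the decomposition, with weights `⟨ℓₖ, ℓₖ⟩`.
-/

open Polynomial ComplexConjugate
open scoped LaurentPolynomial

lemma exists_ne_zero_forall_apply_eq_zero {K E F : Type*} [Field K] [AddCommGroup E] [Module K E]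
    [AddCommGroup F] [Module K F] [FiniteDimensional K E] [FiniteDimensional K F] {σ : K →+* K}
    (B : E →ₛₗ[σ] F →ₗ[K] K) (h : Module.finrank K E < Module.finrank K F) :
    ∃ v ≠ 0, ∀ w, B w v = 0 := by
  let b := Module.finBasis K E
  have hker : (LinearMap.pi fun i => B (b i)).ker ≠ ⊥ :=
    LinearMap.ker_ne_bot_of_finrank_lt (by simpa using h)
  obtain ⟨v, hv, hv0⟩ := Submodule.exists_mem_ne_zero_of_ne_bot hker
  have hflip : B.flip v = 0 := b.ext fun i => congrFun (LinearMap.mem_ker.1 hv) i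
  exact ⟨v, hv0, LinearMap.congr_fun hflip⟩

lemma finrank_degreeLT {K : Type*} [Field K] (n : ℕ) : Module.finrank K K[X]_n = n := by
  simpa using (degreeLTEquiv K n).finrank_eq

lemma X_sub_C_mul_mem_degreeLT_succ {R : Type*} [CommRing R] [Nontrivial R] {n : ℕ} {a : R}
    {p : R[X]} : (X - C a) * p ∈ R[X]_(n + 1) ↔ p ∈ R[X]_n := by
  rw [mem_degreeLT, mem_degreeLT, mul_comm, (monic_X_sub_C a).degree_mul, degree_X_sub_C,
    Nat.cast_succ, WithBot.add_lt_add_iff_right WithBot.one_ne_bot]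

section Lagrange

variable {F ι : Type*} [Field F] [DecidableEq ι] {s : Finset ι} {v : ι → F}

lemma eq_eval_smul_lagrangeBasis (hv : Set.InjOn v s) {f : F[X]} (hf : f.degree < s.card) {i : ι}
    (hi : i ∈ s) (hzero : ∀ j ∈ s, j ≠ i → f.eval (v j) = 0) :
    f = f.eval (v i) • Lagrange.basis s v i := by
  conv_lhs => rw [Lagrange.eq_interpolate hv hf, Lagrange.interpolate_apply,
    Finset.sum_eq_single_of_mem i hi fun j hj hji => by simp [hzero j hj hji]]
  rw [smul_eq_C_mul]

lemma apply_eq_sum_of_lagrangeBasis_orthogonal {σ : F →+* F} (B : F[X] →ₛₗ[σ] F[X] →ₗ[F] F)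
    (hv : Set.InjOn v s) (horth : (s : Set ι).Pairwise fun j k =>
      B (Lagrange.basis s v j) (Lagrange.basis s v k) = 0)
    {f g : F[X]} (hf : f.degree < s.card) (hg : g.degree < s.card) :
    B f g = ∑ k ∈ s, σ (f.eval (v k)) * g.eval (v k) *
      B (Lagrange.basis s v k) (Lagrange.basis s v k) := by
  conv_lhs => rw [Lagrange.eq_interpolate hv hf, Lagrange.eq_interpolate hv hg]
  simp only [Lagrange.interpolate_apply, ← smul_eq_C_mul, map_sum, LinearMap.sum_apply,
    map_smulₛₗ, LinearMap.smul_apply, RingHom.id_apply, smul_eq_mul]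
  refine Finset.sum_congr rfl fun k hk => ?_
  rw [Finset.sum_eq_single_of_mem k hk fun j hj hjk => by rw [horth hj hk hjk, mul_zero]]
  ring

lemma lagrangeBasis_mem_degreeLT {n : ℕ} {v : Fin n → F} (hv : v.Injective) (i : Fin n) :
    Lagrange.basis Finset.univ v i ∈ F[X]_n := by
  rw [mem_degreeLT, Lagrange.degree_basis hv.injOn (Finset.mem_univ i), Finset.card_fin]
  exact_mod_cast Nat.sub_lt i.pos one_pos

end Lagrange

section ToeplitzForm

variable {n : ℕ} {B : ℂ[X] →ₗ⋆[ℂ] ℂ[X] →ₗ[ℂ] ℂ} {ζ w : ℂ} {ω q s : ℂ[X]}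

/-- A Toeplitz form of order `n`: a sesquilinear form on polynomials for which multiplication by
`X` is isometric and which restricts to an inner product on polynomials of degree at most `n`. -/
structure IsToeplitzForm (n : ℕ) (B : ℂ[X] →ₗ⋆[ℂ] ℂ[X] →ₗ[ℂ] ℂ) : Prop where
  shift : ∀ p q, B (X * p) (X * q) = B p q
  conj_symm : ∀ p ∈ ℂ[X]_(n + 1), ∀ q ∈ ℂ[X]_(n + 1), conj (B p q) = B q p
  pos : ∀ p ∈ ℂ[X]_(n + 1), p ≠ 0 → 0 < B p p

/-- A para-orthogonal polynomial of order `n + 1`: nonzero, of degree at most `n + 1`, and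
orthogonal to `X, …, X ^ n`. Its roots are the nodes of a quadrature formula for `B`. -/
structure IsParaorthogonal (n : ℕ) (B : ℂ[X] →ₗ⋆[ℂ] ℂ[X] →ₗ[ℂ] ℂ) (ω : ℂ[X]) : Prop where
  mem : ω ∈ ℂ[X]_(n + 2)
  ne_zero : ω ≠ 0
  orth : ∀ r ∈ ℂ[X]_n, B (X * r) ω = 0

lemma exists_isParaorthogonal_isRoot (n : ℕ) (B : ℂ[X] →ₗ⋆[ℂ] ℂ[X] →ₗ[ℂ] ℂ) (ζ : ℂ) :
    ∃ ω, IsParaorthogonal n B ω ∧ ω.IsRoot ζ := by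
  let A := ((B.comp (LinearMap.mulLeft ℂ X)).compl₂ (LinearMap.mulLeft ℂ (X - C ζ))).domRestrict₁₂
    ℂ[X]_n ℂ[X]_(n + 1)
  obtain ⟨p, hp0, hp⟩ := exists_ne_zero_forall_apply_eq_zero A (by simp [finrank_degreeLT])
  exact ⟨(X - C ζ) * (p : ℂ[X]), ⟨X_sub_C_mul_mem_degreeLT_succ.2 p.2,
    mul_ne_zero (X_sub_C_ne_zero ζ) (Subtype.coe_ne_coe.2 hp0), fun r hr => hp ⟨r, hr⟩⟩, by simp⟩

namespace IsToeplitzForm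

lemma apply_X_mul_X_sub_C_mul (hB : IsToeplitzForm n B) (hζ : ‖ζ‖ = 1) (hs : s ∈ ℂ[X]_n) :
    B (X * s) ((X - C ζ) * s) = -ζ * conj (B s ((X - C ζ) * s)) := by
  have hs' : s ∈ ℂ[X]_(n + 1) := degreeLT_mono n.le_succ hs
  have hζs := X_sub_C_mul_mem_degreeLT_succ (a := ζ).2 hs
  have hζζ : ζ * conj ζ = 1 := by simp [Complex.mul_conj', hζ]
  rw [hB.conj_symm s hs' _ hζs]
  simp only [sub_mul, ← smul_eq_C_mul, map_sub, map_smulₛₗ, LinearMap.sub_apply,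
    LinearMap.smul_apply, RingHom.id_apply, smul_eq_mul, hB.shift]
  linear_combination (-B s s) * hζζ

lemma apply_X_mul_X_sub_C_mul_ne_zero (hB : IsToeplitzForm n B) (hζ : ‖ζ‖ = 1)
    (hs : s ∈ ℂ[X]_n) (hs0 : s ≠ 0) : B (X * s) ((X - C ζ) * s) ≠ 0 := by
  intro h
  have hs' : B s ((X - C ζ) * s) = 0 := by
    have hζ0 : ζ ≠ 0 := norm_ne_zero_iff.1 (by simp [hζ])
    simpa [h, hζ0] using hB.apply_X_mul_X_sub_C_mul hζ hs
  have hpos := hB.pos _ (X_sub_C_mul_mem_degreeLT_succ (a := ζ).2 hs)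
    (mul_ne_zero (X_sub_C_ne_zero ζ) hs0)
  have hzero : B (X * s - ζ • s) ((X - C ζ) * s) = 0 := by
    rw [map_sub, map_smulₛₗ, LinearMap.sub_apply, LinearMap.smul_apply, h, hs', smul_zero, sub_zero]
  rw [smul_eq_C_mul, ← sub_mul] at hzero
  exact hpos.ne' hzero

end IsToeplitzForm

namespace IsParaorthogonal

lemma apply_eq_mul_apply_X_mul (hω : IsParaorthogonal n B ((X - C w) * q))
    (hB : IsToeplitzForm n B) {r : ℂ[X]} (hr : r ∈ ℂ[X]_n) : B r q = w * B (X * r) q := by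
  have h := hω.orth r hr
  rwa [sub_mul, ← smul_eq_C_mul, map_sub, map_smul, hB.shift, smul_eq_mul, sub_eq_zero] at h

lemma natDegree_eq (hω : IsParaorthogonal n B ω) (hB : IsToeplitzForm n B) (hζ : ‖ζ‖ = 1)
    (hroot : ω.IsRoot ζ) : ω.natDegree = n + 1 := by
  have hle : ω.natDegree < n + 2 := (natDegree_lt_iff_degree_lt hω.ne_zero).2
    (mem_degreeLT.1 hω.mem)
  refine (Nat.lt_succ_iff.1 hle).antisymm (not_lt.1 fun hlt => ?_)
  obtain ⟨p, rfl⟩ := dvd_iff_isRoot.2 hroot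
  have hp : p ∈ ℂ[X]_n := X_sub_C_mul_mem_degreeLT_succ.1
    (mem_degreeLT.2 ((natDegree_lt_iff_degree_lt hω.ne_zero).1 hlt))
  exact hB.apply_X_mul_X_sub_C_mul_ne_zero hζ hp (right_ne_zero_of_mul hω.ne_zero) (hω.orth p hp)

lemma norm_eq_one_of_isRoot (hω : IsParaorthogonal n B ω) (hB : IsToeplitzForm n B)
    (hζ : ‖ζ‖ = 1) (hroot : ω.IsRoot ζ) (hw : ω.IsRoot w) : ‖w‖ = 1 := by
  rcases eq_or_ne w ζ with rfl | hne
  · exact hζ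
  obtain ⟨p, rfl⟩ := dvd_iff_isRoot.2 hroot
  have hp : p.IsRoot w := by simpa [sub_eq_zero, hne] using hw
  obtain ⟨s, rfl⟩ := dvd_iff_isRoot.2 hp
  rw [mul_left_comm] at hω
  have hs : s ∈ ℂ[X]_n :=
    X_sub_C_mul_mem_degreeLT_succ.1 (X_sub_C_mul_mem_degreeLT_succ.1 hω.mem)
  have hs0 : s ≠ 0 := right_ne_zero_of_mul (right_ne_zero_of_mul hω.ne_zero)
  have hnorm : ‖B (X * s) ((X - C ζ) * s)‖ = ‖B s ((X - C ζ) * s)‖ := by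
    simp [hB.apply_X_mul_X_sub_C_mul hζ hs, hζ]
  rw [hω.apply_eq_mul_apply_X_mul hB hs, norm_mul, eq_comm] at hnorm
  exact (mul_eq_right₀
    (norm_ne_zero_iff.2 (hB.apply_X_mul_X_sub_C_mul_ne_zero hζ hs hs0))).1 hnorm

lemma apply_eq_zero_of_isRoot (hω : IsParaorthogonal n B ((X - C w) * q))
    (hB : IsToeplitzForm n B) (hw : ‖w‖ = 1) {f : ℂ[X]} (hf : f ∈ ℂ[X]_(n + 1))
    (hroot : f.IsRoot w) : B f q = 0 := by
  obtain ⟨r, rfl⟩ := dvd_iff_isRoot.2 hroot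
  have hww : conj w * w = 1 := by simp [Complex.conj_mul', hw]
  rw [sub_mul, ← smul_eq_C_mul, map_sub, LinearMap.sub_apply, map_smulₛₗ, LinearMap.smul_apply,
    smul_eq_mul, hω.apply_eq_mul_apply_X_mul hB (X_sub_C_mul_mem_degreeLT_succ.1 hf),
    ← mul_assoc, hww, one_mul, sub_self]

lemma nodup_roots (hω : IsParaorthogonal n B ω) (hB : IsToeplitzForm n B) (hζ : ‖ζ‖ = 1)
    (hroot : ω.IsRoot ζ) : ω.roots.Nodup := by
  refine Multiset.nodup_iff_count_le_one.2 fun w => ?_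
  rw [count_roots]
  by_contra! hlt
  obtain ⟨g, hg⟩ := (le_rootMultiplicity_iff hω.ne_zero).1 (Nat.succ_le_of_lt hlt)
  rw [sq, mul_assoc] at hg
  subst hg
  have hmem := X_sub_C_mul_mem_degreeLT_succ.1 hω.mem
  have hw := hω.norm_eq_one_of_isRoot hB hζ hroot (w := w) (by simp)
  exact (hB.pos _ hmem (right_ne_zero_of_mul hω.ne_zero)).ne'
    (hω.apply_eq_zero_of_isRoot hB hw hmem (by simp))

lemma exists_injective_isRoot {ζ : Circle} (hω : IsParaorthogonal n B ω)
    (hB : IsToeplitzForm n B) (hroot : ω.IsRoot ζ) :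
    ∃ z : Fin (n + 1) → Circle, z.Injective ∧ z 0 = ζ ∧ ∀ k, ω.IsRoot (z k) := by
  have hζ := Circle.norm_coe ζ
  have hcard : ω.roots.toFinset.card = n + 1 := by
    rw [Multiset.toFinset_card_of_nodup (hω.nodup_roots hB hζ hroot),
      splits_iff_card_roots.1 (IsAlgClosed.splits ω), hω.natDegree_eq hB hζ hroot]
  have hmem (w : ω.roots.toFinset) : ω.IsRoot w :=
    isRoot_of_mem_roots (Multiset.mem_toFinset.1 w.2)
  let ζ' : ω.roots.toFinset := ⟨ζ, by simpa [hω.ne_zero] using hroot⟩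
  let e := (Finset.equivFinOfCardEq hcard).symm.setValue 0 ζ'
  have he : e 0 = ζ' := Equiv.setValue_eq _ _ _
  have hnorm (k : Fin (n + 1)) : (e k : ℂ) ∈ Submonoid.unitSphere ℂ :=
    mem_sphere_zero_iff_norm.2 (hω.norm_eq_one_of_isRoot hB hζ hroot (hmem _))
  refine ⟨fun k => ⟨e k, hnorm k⟩, fun j k hjk => ?_, ?_, fun k => hmem _⟩
  · exact e.injective (Subtype.ext (congrArg Circle.coeHom hjk))
  · exact Circle.ext (congrArg (fun w : ω.roots.toFinset => (w : ℂ)) he)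

lemma lagrangeBasis_orthogonal (hω : IsParaorthogonal n B ω) (hB : IsToeplitzForm n B)
    {z : Fin (n + 1) → Circle} (hz : z.Injective) (hroot : ∀ k, ω.IsRoot (z k)) :
    Pairwise fun j k => B (Lagrange.basis Finset.univ (fun i => (z i : ℂ)) j)
      (Lagrange.basis Finset.univ (fun i => (z i : ℂ)) k) = 0 := by
  intro j k hjk
  have hinj : Function.Injective fun i => (z i : ℂ) := Subtype.val_injective.comp hz
  obtain ⟨q, rfl⟩ := dvd_iff_isRoot.2 (hroot k)
  have hqzero (i : Fin (n + 1)) (hik : i ≠ k) : q.eval (z i : ℂ) = 0 := by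
    simpa [sub_eq_zero, hinj.ne hik] using hroot i
  have hq := eq_eval_smul_lagrangeBasis hinj.injOn
    (by simpa using mem_degreeLT.1 (X_sub_C_mul_mem_degreeLT_succ.1 hω.mem))
    (Finset.mem_univ k) fun i _ => hqzero i
  have hqk : q.eval (z k : ℂ) ≠ 0 := fun h =>
    right_ne_zero_of_mul hω.ne_zero (by rw [hq, h, zero_smul])
  have horth := hω.apply_eq_zero_of_isRoot hB (Circle.norm_coe _)
    (lagrangeBasis_mem_degreeLT hinj j)
    (Lagrange.eval_basis_of_ne (v := fun i => (z i : ℂ)) hjk (Finset.mem_univ k))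
  rw [hq, map_smul, smul_eq_mul] at horth
  exact (mul_eq_zero.1 horth).resolve_left hqk

end IsParaorthogonal

theorem IsToeplitzForm.exists_quadrature (hB : IsToeplitzForm n B) (ζ : Circle) :
    ∃ (z : Fin (n + 1) → Circle) (a : Fin (n + 1) → ℝ), z.Injective ∧ z 0 = ζ ∧ (∀ k, 0 < a k) ∧
      ∀ f ∈ ℂ[X]_(n + 1), ∀ g ∈ ℂ[X]_(n + 1),
        B f g = ∑ k, conj (f.eval (z k : ℂ)) * g.eval (z k : ℂ) * a k := by
  obtain ⟨ω, hω, hroot⟩ := exists_isParaorthogonal_isRoot n B ζ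
  obtain ⟨z, hz, hz0, hzroot⟩ := hω.exists_injective_isRoot hB hroot
  have hinj : Function.Injective fun k => (z k : ℂ) := Subtype.val_injective.comp hz
  let ℓ := Lagrange.basis Finset.univ fun k => (z k : ℂ)
  have hpos (k : Fin (n + 1)) : 0 < B (ℓ k) (ℓ k) :=
    hB.pos _ (lagrangeBasis_mem_degreeLT hinj k)
      (Lagrange.basis_ne_zero hinj.injOn (Finset.mem_univ k))
  refine ⟨z, fun k => (B (ℓ k) (ℓ k)).re, hz, hz0, fun k => (Complex.pos_iff.1 (hpos k)).1,
    fun f hf g hg => ?_⟩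
  rw [apply_eq_sum_of_lagrangeBasis_orthogonal B hinj.injOn
    ((hω.lagrangeBasis_orthogonal hB hz hzroot).set_pairwise _)
    (by simpa using mem_degreeLT.1 hf) (by simpa using mem_degreeLT.1 hg)]
  refine Finset.sum_congr rfl fun k _ => ?_
  rw [← Complex.eq_re_of_ofReal_le (hpos k).le]

end ToeplitzForm

/-- The sesquilinear form on polynomials with `⟨X ^ i, X ^ j⟩ = c (i - j)`, that is, the inner
product of `L²(μ)` when `c` is the sequence of Fourier coefficients of a measure `μ` on `𝕋`. -/
def toeplitzForm (c : ℤ → ℂ) : ℂ[X] →ₗ⋆[ℂ] ℂ[X] →ₗ[ℂ] ℂ :=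
  LinearMap.mk₂'ₛₗ (starRingEnd ℂ) (RingHom.id ℂ)
    (fun p q => Finsupp.linearCombination ℂ c
      (toLaurent (p.map (starRingEnd ℂ)) * LaurentPolynomial.invert (toLaurent q)).coeff)
    (fun p p' q => by simp [add_mul])
    (fun a p q => by simp [smul_eq_C_mul, ← LaurentPolynomial.smul_eq_C_mul])
    (fun p q q' => by simp [mul_add])
    (fun a p q => by simp [smul_eq_C_mul, ← LaurentPolynomial.smul_eq_C_mul])

lemma toeplitzForm_apply (c : ℤ → ℂ) (p q : ℂ[X]) :
    toeplitzForm c p q = Finsupp.linearCombination ℂ c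
      (toLaurent (p.map (starRingEnd ℂ)) * LaurentPolynomial.invert (toLaurent q)).coeff := rfl

lemma toeplitzForm_X_mul_X_mul (c : ℤ → ℂ) (p q : ℂ[X]) :
    toeplitzForm c (X * p) (X * q) = toeplitzForm c p q := by
  simp only [toeplitzForm_apply, Polynomial.map_mul, map_X, map_mul, toLaurent_X,
    LaurentPolynomial.invert_T]
  rw [mul_mul_mul_comm, ← LaurentPolynomial.T_add, add_neg_cancel, LaurentPolynomial.T_zero,
    one_mul]

lemma toeplitzForm_X_pow (c : ℤ → ℂ) (i j : ℕ) :
    toeplitzForm c (X ^ i) (X ^ j) = c (i - j) := by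
  rw [toeplitzForm_apply, Polynomial.map_pow, map_X, toLaurent_X_pow, toLaurent_X_pow,
    LaurentPolynomial.invert_T, ← LaurentPolynomial.T_add, ← sub_eq_add_neg]
  exact (Finsupp.linearCombination_single ℂ 1 _).trans (one_smul ℂ _)

lemma toeplitzForm_eq_dotProduct (c : ℤ → ℂ) {N : ℕ} {p q : ℂ[X]} (hp : p ∈ ℂ[X]_N)
    (hq : q ∈ ℂ[X]_N) : toeplitzForm c p q =
      star (fun i : Fin N => p.coeff i) ⬝ᵥ
        (Matrix.of fun i j : Fin N => c ((i : ℤ) - j)) *ᵥ fun j => q.coeff j := by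
  have hexpand {f : ℂ[X]} (hf : f ∈ ℂ[X]_N) : f = ∑ i : Fin N, f.coeff i • X ^ (i : ℕ) := by
    simp only [smul_eq_C_mul]
    rw [sum_fin (fun i a => C a * X ^ i) (by simp) (mem_degreeLT.1 hf), sum_C_mul_X_pow_eq]
  conv_lhs => rw [hexpand hp, hexpand hq]
  simp only [map_sum, LinearMap.sum_apply, map_smulₛₗ, LinearMap.smul_apply, RingHom.id_apply,
    smul_eq_mul, toeplitzForm_X_pow, dotProduct, mulVec, Matrix.of_apply, Pi.star_apply,
    Finset.mul_sum, starRingEnd_apply]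
  rw [Finset.sum_comm]
  exact Finset.sum_congr rfl fun i _ => Finset.sum_congr rfl fun j _ => by ring

lemma isToeplitzForm_toeplitzForm {c : ℤ → ℂ} {n : ℕ}
    (hpd : (Matrix.of fun i j : Fin (n + 1) => c ((i : ℤ) - j)).PosDef) :
    IsToeplitzForm n (toeplitzForm c) where
  shift := toeplitzForm_X_mul_X_mul c
  conj_symm p hp q hq := by
    rw [toeplitzForm_eq_dotProduct c hp hq, toeplitzForm_eq_dotProduct c hq hp, starRingEnd_apply,
      ← star_dotProduct_star, star_star, star_mulVec, hpd.isHermitian.eq, dotProduct_mulVec,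
      dotProduct_comm]
  pos p hp hp0 := by
    rw [toeplitzForm_eq_dotProduct c hp hp]
    refine hpd.dotProduct_mulVec_pos fun h => hp0 ?_
    have hcoeff : degreeLTEquiv ℂ (n + 1) ⟨p, hp⟩ = 0 := h
    exact (degreeLTEquiv_eq_zero_iff_eq_zero hp).1 hcoeff

lemma Vand_apply {n K : ℕ} (x : Fin K → Circle2pi) (m : Fin (n + 1)) (k : Fin K) :
    Vand n K x m k = (x k).toCircle ^ (m : ℕ) := by
  simp [Vand, fourier_apply, AddCircle.toCircle_nsmul]

/-- Carathéodory–Fejér–Pisarenko decomposition, full-rank case: a positive definite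
Hermitian Toeplitz matrix `T ∈ ℂ^{(n+1)×(n+1)}` decomposes as `T = V D V*` with `V` a
Vandermonde matrix built from `n + 1` pairwise distinct points of `𝕋`, one of which can
be chosen arbitrarily, and `D` diagonal with strictly positive entries. -/
theorem cfp_decomposition_full_rank (n : ℕ) (hn : 1 ≤ n) (c : ℤ → ℂ)
    (hsym : ∀ m : ℤ, |m| ≤ (n : ℤ) → c (-m) = starRingEnd ℂ (c m))
    (T : Matrix (Fin (n + 1)) (Fin (n + 1)) ℂ)
    (hT : T = Matrix.of fun (i j : Fin (n + 1)) => c ((j : ℤ) - (i : ℤ)))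
    (hpd : T.PosDef) :
    ∀ x₀ : Circle2pi,
      ∃ (x : Fin (n + 1) → Circle2pi) (a : Fin (n + 1) → ℝ),
        Function.Injective x ∧ x 0 = x₀ ∧ (∀ k, 0 < a k) ∧
        T = Vand n (n + 1) x * Matrix.diagonal (fun k => (a k : ℂ)) *
              (Vand n (n + 1) x)ᴴ := by
  intro x₀
  subst hT
  let e : Circle2pi ≃ₜ Circle := AddCircle.homeomorphCircle two_pi_pos.ne'
  obtain ⟨z, a, hz, hz0, ha, hquad⟩ :=
    (isToeplitzForm_toeplitzForm hpd.transpose).exists_quadrature (e x₀)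
  refine ⟨fun k => e.symm (z k), a, e.symm.injective.comp hz, by simp [hz0], ha, ?_⟩
  have hnode (k : Fin (n + 1)) : (e.symm (z k)).toCircle = z k := by
    rw [← AddCircle.homeomorphCircle_apply two_pi_pos.ne']
    exact e.apply_symm_apply (z k)
  have hX (m : Fin (n + 1)) : (X ^ (m : ℕ) : ℂ[X]) ∈ ℂ[X]_(n + 1) :=
    mem_degreeLT.2 (by rw [degree_X_pow]; exact_mod_cast m.isLt)
  ext i j
  rw [Matrix.of_apply, ← toeplitzForm_X_pow c, hquad _ (hX j) _ (hX i), Matrix.mul_apply]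
  refine Finset.sum_congr rfl fun k _ => ?_
  rw [Matrix.mul_diagonal, Matrix.conjTranspose_apply, Vand_apply, Vand_apply, hnode, eval_pow,
    eval_pow, eval_X, starRingEnd_apply]
  ring
end
end
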